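/- For every n ≥ 3 there exists a simple closed n-gon P in ℝ² such that the polygonal diameter of int P equals ⌊n/2⌋ and the polygonal diameter of ext P equals ⌈n/2⌉ (both extremal bounds attained simultaneously). -/

import Mathlib

open Set Metric

abbrev Plane := EuclideanSpace ℝ (Fin 2)

/-- The `i`-th edge of the closed polygon with vertex cycle `p`. -/
def polyEdge {n : ℕ} (p : ZMod n → Plane) (i : ZMod n) : Set Plane :=
  segment ℝ (p i) (p (i + 1))

/-- The union of the edges of the closed polygon with vertex cycle `p`. -/
def polyBody {n : ℕ} (p : ZMod n → Plane) : Set Plane :=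
  ⋃ i, polyEdge p i

/-- `p` is the vertex cycle of a simple closed `n`-gon: distinct vertices,
consecutive edges meet exactly in their common endpoint, non-consecutive edges
are disjoint. -/
structure IsSimplePolygon {n : ℕ} (p : ZMod n → Plane) : Prop where
  three_le : 3 ≤ n
  inj : Function.Injective p
  consec : ∀ i : ZMod n, polyEdge p i ∩ polyEdge p (i + 1) = {p (i + 1)}
  nonconsec : ∀ i j : ZMod n, j ≠ i → j ≠ i + 1 → i ≠ j + 1 →
    polyEdge p i ∩ polyEdge p j = ∅

/-- The union of the bounded connected components of the complement of `P`
(the Jordan interior of `P`). -/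
def intP (P : Set Plane) : Set Plane :=
  {x | x ∉ P ∧ Bornology.IsBounded (connectedComponentIn Pᶜ x)}

/-- The union of the unbounded connected components of the complement of `P`
(the Jordan exterior of `P`). -/
def extP (P : Set Plane) : Set Plane :=
  {x | x ∉ P ∧ ¬ Bornology.IsBounded (connectedComponentIn Pᶜ x)}

/-- There is a polygonal path of `k` segments from `a` to `b` inside `S`. -/
def PolyPath (S : Set Plane) (a b : Plane) (k : ℕ) : Prop :=
  ∃ x : Fin (k + 1) → Plane, x 0 = a ∧ x (Fin.last k) = b ∧
    ∀ i : Fin k, segment ℝ (x i.castSucc) (x i.succ) ⊆ S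

/-- The minimal number of segments of a polygonal path from `a` to `b` in `S`. -/
noncomputable def polyDist (S : Set Plane) (a b : Plane) : ℕ :=
  sInf {k | PolyPath S a b k}

/-!
The extremal polygon is a double spiral: two arms start at the origin and wind around it in
parallel, with all their vertices on three fixed rays, and a last edge joins their outer ends. The
arms bound two interleaved corridors, one of which is the interior and the other the exterior. The
rays cut the corridors into convex cells, labelled by integers so that the cells `k` and `k + 2` of
a corridor are adjacent. One segment per cell is enough to traverse a corridor, except that in the
exterior a point far out sees the outermost cell and saves the last turns.

For the lower bounds, cut each cell by a line separating its two ends. A segment that starts before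
the cut of the cell `k` and avoids the spiral never gets past the cut of the cell `k + 2`, because
passing through the gap between these cells forces it too far outwards. Hence every segment advances
by at most one cell.
-/

section Segments

variable {E : Type*} [AddCommGroup E] [Module ℝ E] [TopologicalSpace E]

lemma exists_mem_segment_map_eq [IsTopologicalAddGroup E] [ContinuousSMul ℝ E] (f : E →L[ℝ] ℝ)
    {x y : E} {c : ℝ} (hx : f x ≤ c) (hy : c ≤ f y) : ∃ z ∈ segment ℝ x y, f z = c :=
  (convex_segment x y).isPreconnected.intermediate_value (left_mem_segment ℝ x y)
    (right_mem_segment ℝ x y) f.continuous.continuousOn ⟨hx, hy⟩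

variable {f : E →L[ℝ] ℝ} {x y z : E} {c : ℝ}

lemma map_le_of_mem_segment (hx : f x ≤ c) (hy : f y ≤ c) (hz : z ∈ segment ℝ x y) : f z ≤ c :=
  (convex_halfSpace_le f.isLinear c).segment_subset hx hy hz

lemma map_lt_of_mem_segment (hx : f x < c) (hy : f y < c) (hz : z ∈ segment ℝ x y) : f z < c :=
  (convex_halfSpace_lt f.isLinear c).segment_subset hx hy hz

lemma le_map_of_mem_segment (hx : c ≤ f x) (hy : c ≤ f y) (hz : z ∈ segment ℝ x y) : c ≤ f z :=
  (convex_halfSpace_ge f.isLinear c).segment_subset hx hy hz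

lemma lt_map_of_mem_segment (hx : c < f x) (hy : c < f y) (hz : z ∈ segment ℝ x y) : c < f z :=
  (convex_halfSpace_gt f.isLinear c).segment_subset hx hy hz

lemma map_lt_or_eq_left_of_mem_segment (hx : f x ≤ c) (hy : f y < c) (hz : z ∈ segment ℝ x y) :
    f z < c ∨ z = x := by
  obtain ⟨a, b, ha, hb, hab, rfl⟩ := hz
  rcases hb.eq_or_lt with rfl | hb
  · right
    rw [show a = 1 by linarith, one_smul, zero_smul, add_zero]
  · left
    rw [map_add, map_smul, map_smul, smul_eq_mul, smul_eq_mul]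
    calc a * f x + b * f y < a * c + b * c :=
          add_lt_add_of_le_of_lt (mul_le_mul_of_nonneg_left hx ha) (mul_lt_mul_of_pos_left hy hb)
      _ = c := by rw [← add_mul, hab, one_mul]

lemma lt_map_or_eq_left_of_mem_segment (hx : c ≤ f x) (hy : c < f y) (hz : z ∈ segment ℝ x y) :
    c < f z ∨ z = x := by
  have := map_lt_or_eq_left_of_mem_segment (f := -f) (neg_le_neg hx) (neg_lt_neg hy) hz
  exact this.imp_left neg_lt_neg_iff.1

end Segments

namespace PolyPath

variable {S : Set Plane} {a b c : Plane} {k : ℕ}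

lemma single (h : segment ℝ a b ⊆ S) : PolyPath S a b 1 := by
  refine ⟨![a, b], rfl, rfl, fun i => ?_⟩
  rw [Subsingleton.elim i 0]
  exact h

lemma cons (hab : segment ℝ a b ⊆ S) (hbc : PolyPath S b c k) : PolyPath S a c (k + 1) := by
  obtain ⟨x, rfl, rfl, hx⟩ := hbc
  refine ⟨Fin.cons a x, rfl, ?_, fun i => ?_⟩
  · rw [← Fin.succ_last, Fin.cons_succ]
  · induction i using Fin.cases with
    | zero => exact hab
    | succ i =>
      rw [Fin.castSucc_succ, Fin.cons_succ, Fin.cons_succ]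
      exact hx i

lemma symm (h : PolyPath S a b k) : PolyPath S b a k := by
  obtain ⟨x, rfl, rfl, hx⟩ := h
  refine ⟨x ∘ Fin.rev, by simp, by simp, fun i => ?_⟩
  rw [Function.comp_apply, Function.comp_apply, Fin.rev_castSucc, Fin.rev_succ, segment_symm]
  exact hx i.rev

lemma mem_of_forall_step (h : PolyPath S a b k) (L : ℕ → Set Plane) (ha : a ∈ L 0)
    (hL : ∀ i < k, ∀ x ∈ L i, ∀ y, segment ℝ x y ⊆ S → y ∈ L (i + 1)) : b ∈ L k := by
  obtain ⟨x, rfl, rfl, hx⟩ := h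
  suffices ∀ i : Fin (k + 1), x i ∈ L i from this (Fin.last k)
  intro i
  induction i using Fin.induction with
  | zero => exact ha
  | succ i ih => exact hL i i.isLt _ ih _ (hx i)

lemma isPreconnected_of_forall (h : ∀ a ∈ S, ∀ b ∈ S, ∃ k, PolyPath S a b k) :
    IsPreconnected S := by
  refine isPreconnected_of_forall_pair fun a ha b hb => ?_
  obtain ⟨k, hk⟩ := h a ha b hb
  obtain ⟨T, ⟨hTS, haT, hT⟩, hbT⟩ := hk.mem_of_forall_step
    (fun _ => {y | ∃ T, (T ⊆ S ∧ a ∈ T ∧ IsPreconnected T) ∧ y ∈ T})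
    ⟨{a}, ⟨singleton_subset_iff.2 ha, rfl, isPreconnected_singleton⟩, rfl⟩ fun i _ x hx y hxy => by
      obtain ⟨T, ⟨hTS, haT, hT⟩, hxT⟩ := hx
      exact ⟨T ∪ segment ℝ x y, ⟨union_subset hTS hxy, Or.inl haT,
        hT.union x hxT (left_mem_segment ℝ x y) (convex_segment x y).isPreconnected⟩,
        Or.inr (right_mem_segment ℝ x y)⟩
  exact ⟨T, hTS, haT, hbT, hT⟩

end PolyPath

section Components

variable {X : Type*} [TopologicalSpace X] {P A B : Set X}

lemma connectedComponentIn_compl_subset (hA : IsOpen A) (hB : IsOpen B) (hAB : Disjoint A B)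
    (hP : Pᶜ = A ∪ B) {x : X} (hx : x ∈ A) : connectedComponentIn Pᶜ x ⊆ A :=
  isPreconnected_connectedComponentIn.subset_left_of_subset_union hA hB hAB
    (hP ▸ connectedComponentIn_subset _ _)
    ⟨x, mem_connectedComponentIn (hP ▸ Or.inl hx), hx⟩

lemma isBounded_connectedComponentIn_compl_iff [Bornology X] (hA : IsOpen A)
    (hB : IsOpen B) (hAB : Disjoint A B) (hP : Pᶜ = A ∪ B) (hA_bdd : Bornology.IsBounded A)
    (hB_conn : IsPreconnected B) (hB_unbdd : ¬ Bornology.IsBounded B) {x : X} (hx : x ∉ P) :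
    Bornology.IsBounded (connectedComponentIn Pᶜ x) ↔ x ∈ A := by
  refine ⟨fun h => ?_, fun h => hA_bdd.subset (connectedComponentIn_compl_subset hA hB hAB hP h)⟩
  by_contra hxA
  have hxB : x ∈ B := (hP ▸ hx : x ∈ A ∪ B).resolve_left hxA
  exact hB_unbdd (h.subset (hB_conn.subset_connectedComponentIn hxB (hP ▸ subset_union_right)))

end Components

section JordanRegions

variable {P A B : Set Plane}

lemma intP_eq (hA : IsOpen A) (hB : IsOpen B) (hAB : Disjoint A B) (hP : Pᶜ = A ∪ B)
    (hA_bdd : Bornology.IsBounded A) (hB_conn : IsPreconnected B)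
    (hB_unbdd : ¬ Bornology.IsBounded B) : intP P = A := by
  ext x
  have hAP : x ∈ A → x ∉ P := fun h => hP.superset (Or.inl h)
  have h_iff (hx : x ∉ P) : Bornology.IsBounded (connectedComponentIn Pᶜ x) ↔ x ∈ A :=
    isBounded_connectedComponentIn_compl_iff hA hB hAB hP hA_bdd hB_conn hB_unbdd hx
  exact ⟨fun h => (h_iff h.1).1 h.2, fun h => ⟨hAP h, (h_iff (hAP h)).2 h⟩⟩

lemma extP_eq (hA : IsOpen A) (hB : IsOpen B) (hAB : Disjoint A B) (hP : Pᶜ = A ∪ B)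
    (hA_bdd : Bornology.IsBounded A) (hB_conn : IsPreconnected B)
    (hB_unbdd : ¬ Bornology.IsBounded B) : extP P = B := by
  have h_int := intP_eq hA hB hAB hP hA_bdd hB_conn hB_unbdd
  have h_ext : extP P = Pᶜ \ intP P := by
    ext x
    simp only [extP, intP, mem_ofPred_eq, mem_sdiff, mem_compl_iff]
    tauto
  rw [h_ext, h_int, hP, union_sdiff_left, hAB.symm.sdiff_eq_left]

end JordanRegions

lemma isSimplePolygon_of_inter_subset_range {n : ℕ} {p : ZMod n → Plane} (hn : 3 ≤ n)
    (hp : Function.Injective p)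
    (h_inter : ∀ i j, i ≠ j → polyEdge p i ∩ polyEdge p j ⊆ range p)
    (h_vertex : ∀ m i, p m ∈ polyEdge p i → m = i ∨ m = i + 1) : IsSimplePolygon p := by
  have : Fact (1 < n) := ⟨by omega⟩
  have h_two_ne_zero : (1 + 1 : ZMod n) ≠ 0 := by
    have := (ZMod.natCast_eq_zero_iff 2 n).not.2 fun h => by have := Nat.le_of_dvd two_pos h; omega
    rwa [Nat.cast_two, ← one_add_one_eq_two] at this
  refine ⟨hn, hp, fun i => Subset.antisymm ?_ ?_, fun i j h₁ h₂ h₃ => ?_⟩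
  · rintro x hx
    obtain ⟨m, rfl⟩ := h_inter i (i + 1) (by simp) hx
    rcases h_vertex m i hx.1 with rfl | rfl
    · rcases h_vertex m (m + 1) hx.2 with h | h
      · simp at h
      · exact absurd (by simpa [add_assoc] using h) h_two_ne_zero
    · rfl
  · rw [singleton_subset_iff]
    exact ⟨right_mem_segment ℝ _ _, left_mem_segment ℝ _ _⟩
  · rw [eq_empty_iff_forall_notMem]
    rintro x hx
    obtain ⟨m, rfl⟩ := h_inter i j h₁.symm hx
    rcases h_vertex m i hx.1 with rfl | rfl <;> rcases h_vertex _ j hx.2 with h | h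
    · exact h₁ h.symm
    · exact h₃ h
    · exact h₂ h.symm
    · exact h₁ (add_right_cancel h).symm

namespace DoubleSpiral

/-- The directions of three rays from the origin, cyclically indexed modulo `3`; every vertex of
the double spiral lies on one of them. -/
noncomputable def dir (k : ℤ) : Plane :=
  if k % 3 = 0 then !₂[-1, -1] else if k % 3 = 1 then !₂[1, 0] else !₂[0, 1]

/-- Linear coordinates adapted to `dir`: in the sector spanned by `dir k` and `dir (k - 1)`, the
coefficient of `dir k` is `coord k` and that of `dir (k - 1)` is `-coord (k + 1)`. -/
noncomputable def coord (k : ℤ) : Plane →L[ℝ] ℝ :=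
  if k % 3 = 0 then -EuclideanSpace.proj 0
  else if k % 3 = 1 then EuclideanSpace.proj 0 - EuclideanSpace.proj 1
  else EuclideanSpace.proj 1

section Coordinates

variable {k l : ℤ} {x y : Plane}

lemma dir_congr (h : k % 3 = l % 3) : dir k = dir l := by rw [dir, dir, h]

lemma coord_congr (h : k % 3 = l % 3) : coord k = coord l := by rw [coord, coord, h]

lemma coord_add_three (k : ℤ) : coord (k + 3) = coord k := coord_congr (by omega)

lemma coord_add_two_apply (k : ℤ) (x : Plane) :
    coord (k + 2) x = -coord k x - coord (k + 1) x := by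
  obtain h | h | h : k % 3 = 0 ∨ k % 3 = 1 ∨ k % 3 = 2 := by omega
  all_goals simp [coord, Int.add_emod, h] <;> ring

lemma eq_coord_smul_dir (k : ℤ) (x : Plane) :
    x = coord k x • dir k - coord (k + 1) x • dir (k - 1) := by
  obtain h | h | h : k % 3 = 0 ∨ k % 3 = 1 ∨ k % 3 = 2 := by omega
  all_goals ext i; fin_cases i <;> simp [coord, dir, Int.add_emod, Int.sub_emod, h]

lemma eq_of_coord_eq (k : ℤ) (h₀ : coord k x = coord k y)
    (h₁ : coord (k + 1) x = coord (k + 1) y) : x = y := by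
  rw [eq_coord_smul_dir k x, eq_coord_smul_dir k y, h₀, h₁]

/-- The point of the `k`-th sector with coefficients `p` and `q` on its bounding rays. -/
noncomputable def point (k : ℤ) (p q : ℝ) : Plane := p • dir k + q • dir (k - 1)

@[simp]
lemma coord_point (k : ℤ) (p q : ℝ) : coord k (point k p q) = p := by
  obtain h | h | h : k % 3 = 0 ∨ k % 3 = 1 ∨ k % 3 = 2 := by omega
  all_goals simp [point, coord, dir, Int.sub_emod, h]

@[simp]
lemma coord_succ_point (k : ℤ) (p q : ℝ) : coord (k + 1) (point k p q) = -q := by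
  obtain h | h | h : k % 3 = 0 ∨ k % 3 = 1 ∨ k % 3 = 2 := by omega
  all_goals simp [point, coord, dir, Int.add_emod, Int.sub_emod, h]

lemma exists_sector (hx : x ≠ 0) : ∃ k, 0 ≤ coord k x ∧ coord (k + 1) x < 0 := by
  have h_sum : coord 1 x = -coord (-1) x - coord 0 x := by
    simpa using coord_add_two_apply (-1) x
  by_contra! h
  have h₀ : 0 ≤ coord (-1) x → 0 ≤ coord 0 x := h (-1)
  have h₁ : 0 ≤ coord 0 x → 0 ≤ coord 1 x := h 0
  have h₂ : 0 ≤ coord 1 x → 0 ≤ coord (-1) x := h 1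
  have h_nonneg : 0 ≤ coord (-1) x := by
    by_contra! hneg
    have h₁neg : coord 1 x < 0 := lt_of_not_ge fun h => hneg.not_ge (h₂ h)
    have h₀neg : coord 0 x < 0 := lt_of_not_ge fun h => h₁neg.not_ge (h₁ h)
    linarith
  have h₀_nonneg := h₀ h_nonneg
  have h₁_nonneg := h₁ h₀_nonneg
  refine hx (eq_of_coord_eq (-1) ?_ ?_)
  · rw [map_zero]
    linarith
  · rw [map_zero, show (-1 + 1 : ℤ) = 0 from rfl]
    linarith

lemma mem_segment_smul_dir_iff {r s : ℝ} (hr : 0 < r) (hs : 0 < s) :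
    x ∈ segment ℝ (r • dir k) (s • dir (k - 1)) ↔
      0 ≤ coord k x ∧ coord (k + 1) x ≤ 0 ∧ r⁻¹ * coord k x - s⁻¹ * coord (k + 1) x = 1 := by
  constructor
  · rintro ⟨a, b, ha, hb, hab, rfl⟩
    rw [smul_smul, smul_smul, ← point, coord_point, coord_succ_point]
    refine ⟨by positivity, by simpa using by positivity, ?_⟩
    field_simp
    linarith
  · rintro ⟨hp, hq, h⟩
    refine ⟨r⁻¹ * coord k x, -(s⁻¹ * coord (k + 1) x), by positivity, ?_, by linarith, ?_⟩
    · have := mul_nonneg (inv_nonneg.2 hs.le) (neg_nonneg.2 hq)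
      linarith
    · conv_rhs => rw [eq_coord_smul_dir k x]
      rw [smul_smul, smul_smul, neg_mul, mul_right_comm, mul_right_comm s⁻¹,
        inv_mul_cancel₀ hr.ne', inv_mul_cancel₀ hs.ne', one_mul, one_mul, neg_smul,
        ← sub_eq_add_neg]

lemma mem_segment_zero_smul_dir_iff {s : ℝ} (hs : 0 < s) :
    x ∈ segment ℝ 0 (s • dir (k - 1)) ↔
      coord k x = 0 ∧ coord (k + 1) x ≤ 0 ∧ -s ≤ coord (k + 1) x := by
  constructor
  · rintro ⟨a, b, ha, hb, hab, rfl⟩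
    have h_point : a • 0 + b • s • dir (k - 1) = point k 0 (b * s) := by
      rw [point, zero_smul, smul_zero, smul_smul]
    rw [h_point, coord_point, coord_succ_point]
    exact ⟨rfl, by simpa using by positivity, by nlinarith⟩
  · rintro ⟨hp, hq, h⟩
    have hb : -coord (k + 1) x / s ≤ 1 := by rw [div_le_one hs]; linarith
    refine ⟨1 - -coord (k + 1) x / s, -coord (k + 1) x / s, by linarith,
      div_nonneg (by linarith) hs.le, by ring, ?_⟩
    conv_rhs => rw [eq_coord_smul_dir k x, hp]
    rw [smul_zero, zero_add, zero_smul, zero_sub, smul_smul, div_mul_cancel₀ _ hs.ne', neg_smul]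

end Coordinates

/-- The label of the vertex joined to the vertex `k` by the edge `k`: each arm of the double spiral
skips every other label, and the last edge joins the two arms. -/
def next (n k : ℤ) : ℤ := if k = n then n - 1 else k + 2

/-- The distance of the vertex `k` from the origin along `dir k`. The labels `0` and `1` both denote
the origin, which is the common start of the two arms. -/
noncomputable def radius (k : ℤ) : ℝ := if k ≤ 1 then 0 else k + 2

/-- The vertices of the double spiral; the even and the odd labels form its two arms. -/
noncomputable def vertex (k : ℤ) : Plane := radius k • dir k

/-- The edges of the double spiral with `n` edges are labelled by `0, …, n - 2` and `n`. -/
structure IsEdge (n k : ℤ) : Prop where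
  nonneg : 0 ≤ k
  le : k ≤ n
  ne : k ≠ n - 1

/-- The edge of the double spiral with label `k`. It lies in the sector spanned by `dir k` and
`dir (k - 1)`. -/
def edge (n k : ℤ) : Set Plane := segment ℝ (vertex k) (vertex (next n k))

/-- The double spiral with `n` edges. -/
def spiral (n : ℤ) : Set Plane := {x | ∃ k, IsEdge n k ∧ x ∈ edge n k}

/-- For `2 ≤ k`, the linear form which equals `1` on the line through the edge `k`. -/
noncomputable def edgeForm (n k : ℤ) : Plane →L[ℝ] ℝ :=
  (k + 2 : ℝ)⁻¹ • coord k - (next n k + 2 : ℝ)⁻¹ • coord (k + 1)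

section Edges

variable {n k l : ℤ} {x : Plane}

lemma next_self (n : ℤ) : next n n = n - 1 := if_pos rfl

lemma next_of_ne (h : k ≠ n) : next n k = k + 2 := if_neg h

lemma sub_one_le_next (n k : ℤ) : k - 1 ≤ next n k := by
  unfold next
  split_ifs <;> omega

lemma next_add_two_pos (n : ℤ) (hk : 0 ≤ k) : (0 : ℝ) < next n k + 2 := by
  have := sub_one_le_next n k
  exact_mod_cast (by omega : 0 < next n k + 2)

lemma dir_next (n k : ℤ) : dir (next n k) = dir (k - 1) := by
  unfold next
  split_ifs with h
  · rw [h]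
  · exact dir_congr (by omega)

lemma radius_of_le_one (h : k ≤ 1) : radius k = 0 := if_pos h

lemma radius_of_two_le (h : 2 ≤ k) : radius k = k + 2 := if_neg (by omega)

lemma two_le_next (hn : 3 ≤ n) (hk : 0 ≤ k) : 2 ≤ next n k := by
  unfold next
  split_ifs <;> omega

lemma edgeForm_apply (n k : ℤ) (x : Plane) :
    edgeForm n k x = (k + 2 : ℝ)⁻¹ * coord k x - (next n k + 2 : ℝ)⁻¹ * coord (k + 1) x := rfl

lemma edgeForm_of_coord_eq_zero (h : coord k x = 0) :
    edgeForm n k x = -coord (k + 1) x / (next n k + 2) := by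
  rw [edgeForm_apply, h]
  ring

lemma edgeForm_of_coord_succ_eq_zero (h : coord (k + 1) x = 0) :
    edgeForm n k x = coord k x / (k + 2) := by
  rw [edgeForm_apply, h]
  ring

lemma mem_edge_iff (hn : 3 ≤ n) (hk : IsEdge n k) (hk2 : 2 ≤ k) :
    x ∈ edge n k ↔ 0 ≤ coord k x ∧ coord (k + 1) x ≤ 0 ∧ edgeForm n k x = 1 := by
  rw [edge, vertex, vertex, dir_next, radius_of_two_le hk2,
    radius_of_two_le (two_le_next hn hk.nonneg),
    mem_segment_smul_dir_iff (by exact_mod_cast (by omega : 0 < k + 2))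
      (next_add_two_pos n hk.nonneg), edgeForm_apply]

lemma mem_wall_iff (hn : 3 ≤ n) (hk : k = 0 ∨ k = 1) :
    x ∈ edge n k ↔ coord k x = 0 ∧ coord (k + 1) x ≤ 0 ∧ -(k + 4) ≤ coord (k + 1) x := by
  have h_next : next n k = k + 2 := next_of_ne (by omega)
  have h_radius : radius (next n k) = k + 4 := by
    rw [h_next, radius_of_two_le (by omega)]
    push_cast
    ring
  rw [edge, vertex, vertex, dir_next, h_radius, radius_of_le_one (by omega), zero_smul,
    mem_segment_zero_smul_dir_iff (by exact_mod_cast (by omega : 0 < k + 4))]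

lemma zero_mem_spiral (hn : 3 ≤ n) : (0 : Plane) ∈ spiral n :=
  ⟨0, ⟨le_rfl, by omega, by omega⟩, (mem_wall_iff hn (Or.inl rfl)).2 (by simp)⟩

lemma next_mono_of_emod_eq (n : ℤ) (h : k % 3 = l % 3) (hkl : k ≤ l) : next n k ≤ next n l := by
  unfold next
  split_ifs <;> omega

lemma inv_next_add_two_anti (n : ℤ) (hk : 0 ≤ k) (h : k % 3 = l % 3) (hkl : k ≤ l) :
    (next n l + 2 : ℝ)⁻¹ ≤ (next n k + 2 : ℝ)⁻¹ := by
  have := next_mono_of_emod_eq n h hkl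
  have := next_add_two_pos n hk
  gcongr

lemma edgeForm_congr (h : k % 3 = l % 3) (x : Plane) :
    edgeForm n l x = (l + 2 : ℝ)⁻¹ * coord k x - (next n l + 2 : ℝ)⁻¹ * coord (k + 1) x := by
  rw [edgeForm_apply, coord_congr h, coord_congr (by omega : (k + 1) % 3 = (l + 1) % 3)]

lemma edgeForm_le_edgeForm (n : ℤ) (hk : 0 ≤ k) (h : k % 3 = l % 3) (hkl : k ≤ l)
    (hx₀ : 0 ≤ coord k x) (hx₁ : coord (k + 1) x ≤ 0) : edgeForm n l x ≤ edgeForm n k x := by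
  have h_inv : (l + 2 : ℝ)⁻¹ ≤ (k + 2 : ℝ)⁻¹ := by gcongr
  rw [edgeForm_congr h, edgeForm_apply]
  linarith [mul_le_mul_of_nonneg_right h_inv hx₀,
    mul_le_mul_of_nonpos_right (inv_next_add_two_anti n hk h hkl) hx₁]

lemma edgeForm_lt_edgeForm (n : ℤ) (hk : 0 ≤ k) (h : k % 3 = l % 3) (hkl : k < l)
    (hx₀ : 0 < coord k x) (hx₁ : coord (k + 1) x ≤ 0) : edgeForm n l x < edgeForm n k x := by
  have h_inv : (l + 2 : ℝ)⁻¹ < (k + 2 : ℝ)⁻¹ := by gcongr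
  rw [edgeForm_congr h, edgeForm_apply]
  linarith [mul_lt_mul_of_pos_right h_inv hx₀,
    mul_le_mul_of_nonpos_right (inv_next_add_two_anti n hk h hkl.le) hx₁]

end Edges

/-- `InBand n k x` says that `x` lies in the closed sector of the edge `k`, strictly between that
edge and the edge `k + 3` following it outwards in the same sector. A band whose inner or outer edge
does not exist is not bounded on that side. The walls `0` and `1` lie on a ray bounding the sector,
and are avoided by `wall`. -/
structure InBand (n k : ℤ) (x : Plane) : Prop where
  neg_one_le : -1 ≤ k
  le : k ≤ n
  ne : k ≠ n - 1
  coord_nonneg : 0 ≤ coord k x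
  coord_succ_nonpos : coord (k + 1) x ≤ 0
  lower : 2 ≤ k → 1 < edgeForm n k x
  upper : IsEdge n (k + 3) → edgeForm n (k + 3) x < 1
  wall : k = 0 ∨ k = 1 → coord k x = 0 → coord (k + 1) x < -(k + 4)

/-- The cells are the bands without the ray along `dir k`; they partition the complement of the
double spiral. -/
structure InCell (n k : ℤ) (x : Plane) : Prop extends InBand n k x where
  coord_succ_neg : coord (k + 1) x < 0

section Bands

variable {n k l : ℤ} {x y z : Plane}

lemma InBand.isEdge (h : InBand n k x) (hk : 0 ≤ k) : IsEdge n k := ⟨hk, h.le, h.ne⟩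

lemma InBand.coord_succ_lt (hn : 3 ≤ n) (h : InBand n k x) (hk : 0 ≤ k) (hx : coord k x = 0) :
    coord (k + 1) x < -(next n k + 2) := by
  rcases lt_or_ge k 2 with hk2 | hk2
  · rw [next_of_ne (by omega)]
    push_cast
    linarith [h.wall (by omega) hx]
  · have := h.lower hk2
    rw [edgeForm_of_coord_eq_zero hx, one_lt_div (next_add_two_pos n hk)] at this
    linarith

lemma InBand.lt_coord_succ (h : InBand n k x) (hk : IsEdge n (k + 3)) (hx : coord k x = 0) :
    -(next n (k + 3) + 2) < coord (k + 1) x := by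
  have h_form := h.upper hk
  rw [edgeForm_of_coord_eq_zero (by rwa [coord_add_three]),
    div_lt_one (next_add_two_pos n hk.nonneg),
    coord_congr (by omega : (k + 3 + 1) % 3 = (k + 1) % 3)] at h_form
  linarith

lemma emod_eq_or_of_sectors (hk₀ : 0 ≤ coord k x) (hk₁ : coord (k + 1) x < 0)
    (hl₀ : 0 ≤ coord l x) (hl₁ : coord (l + 1) x ≤ 0) :
    l % 3 = k % 3 ∨ l % 3 = (k + 2) % 3 ∧ coord k x = 0 := by
  obtain h | h | h : l % 3 = k % 3 ∨ l % 3 = (k + 1) % 3 ∨ l % 3 = (k + 2) % 3 := by omega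
  · exact Or.inl h
  · rw [coord_congr h] at hl₀
    linarith
  · rw [coord_congr (by omega : (l + 1) % 3 = k % 3)] at hl₁
    exact Or.inr ⟨h, le_antisymm hl₁ hk₀⟩

lemma InCell.edgeForm_ne_one_of_emod_eq (h : InCell n k x) (hl : IsEdge n l) (hl2 : 2 ≤ l)
    (hkl : l % 3 = k % 3) : edgeForm n l x ≠ 1 := by
  intro h_one
  have h_le := hl.le
  have h_ne := hl.ne
  rcases le_or_gt l k with hlk | hlk
  · have := edgeForm_le_edgeForm n hl.nonneg hkl hlk
      (by rw [coord_congr hkl]; exact h.coord_nonneg)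
      (by rw [coord_congr (by omega : (l + 1) % 3 = (k + 1) % 3)]; exact h.coord_succ_nonpos)
    linarith [h.lower (by omega)]
  · have := h.neg_one_le
    have := edgeForm_le_edgeForm n (by omega) (by omega) (by omega : k + 3 ≤ l)
      (by rw [coord_add_three]; exact h.coord_nonneg)
      (by rw [coord_congr (by omega : (k + 3 + 1) % 3 = (k + 1) % 3)]; exact h.coord_succ_nonpos)
    linarith [h.upper ⟨by omega, by omega, by omega⟩]

lemma InCell.edgeForm_ne_one_of_coord_eq_zero (hn : 3 ≤ n) (h : InCell n k x) (hl : IsEdge n l)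
    (hl2 : 2 ≤ l) (hkl : l % 3 = (k + 2) % 3) (hx : coord k x = 0) : edgeForm n l x ≠ 1 := by
  intro h_one
  have h_neg := h.neg_one_le
  have h_le := hl.le
  have h_next := sub_one_le_next n k
  have h_next' (h : k ≠ n) := next_of_ne h
  rw [edgeForm_of_coord_succ_eq_zero (by rwa [coord_congr (by omega : (l + 1) % 3 = k % 3)]),
    div_eq_one_iff_eq (by exact_mod_cast (by omega : l + 2 ≠ 0)), coord_congr hkl,
    coord_add_two_apply, hx] at h_one
  obtain hlk | hlk : l ≤ k + 2 ∨ k + 5 ≤ l := by omega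
  · have h_exit := h.coord_succ_lt hn (by omega) hx
    have : next n k < l := by exact_mod_cast (by linarith : (next n k : ℝ) < l)
    omega
  · have h_far := h.lt_coord_succ ⟨by omega, by omega, by omega⟩ hx
    rw [next_of_ne (by omega)] at h_far
    push_cast at h_far
    have : l < k + 5 := by exact_mod_cast (by linarith : (l : ℝ) < k + 5)
    omega

lemma InCell.notMem_wall (hn : 3 ≤ n) (h : InCell n k x) (hl : l = 0 ∨ l = 1) :
    x ∉ edge n l := by
  rw [mem_wall_iff hn hl]
  rintro ⟨hx, hx₁, hx₂⟩
  have h_neg := h.coord_succ_neg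
  rcases emod_eq_or_of_sectors h.coord_nonneg h_neg hx.ge hx₁ with hkl | ⟨hkl, hk⟩
  · have := h.neg_one_le
    have h_exit := h.coord_succ_lt hn (by omega) (by rwa [coord_congr hkl.symm])
    rw [coord_congr (by omega : (l + 1) % 3 = (k + 1) % 3)] at hx₂
    have : next n k < l + 2 := by exact_mod_cast (by linarith : (next n k : ℝ) < l + 2)
    unfold next at this
    split_ifs at this <;> omega
  · rw [coord_congr hkl, coord_add_two_apply] at hx
    linarith

lemma InCell.notMem_spiral (hn : 3 ≤ n) (h : InCell n k x) : x ∉ spiral n := by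
  rintro ⟨l, hl, hx⟩
  rcases lt_or_ge l 2 with hl2 | hl2
  · have := hl.nonneg
    exact h.notMem_wall hn (by omega) hx
  · rw [mem_edge_iff hn hl hl2] at hx
    obtain ⟨hx₀, hx₁, h_one⟩ := hx
    rcases emod_eq_or_of_sectors h.coord_nonneg h.coord_succ_neg hx₀ hx₁ with hkl | ⟨hkl, hk⟩
    · exact h.edgeForm_ne_one_of_emod_eq hl hl2 hkl h_one
    · exact h.edgeForm_ne_one_of_coord_eq_zero hn hl hl2 hkl hk h_one

lemma exists_inCell_of_sector (hn : 3 ≤ n) (hx : x ∉ spiral n) {r : ℤ} (hx₀ : 0 ≤ coord r x)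
    (hx₁ : coord (r + 1) x < 0) : ∃ k, k % 3 = r % 3 ∧ InCell n k x := by
  have hx₀' {k : ℤ} (hk : k % 3 = r % 3) : 0 ≤ coord k x := by rwa [coord_congr hk]
  have hx₁' {k : ℤ} (hk : k % 3 = r % 3) : coord (k + 1) x < 0 := by
    rwa [coord_congr (by omega : (k + 1) % 3 = (r + 1) % 3)]
  obtain ⟨k, ⟨hkr, h_neg, h_le, h_ne, h_lower⟩, h_max⟩ := Int.exists_greatest_of_bdd
    (P := fun k => k % 3 = r % 3 ∧ -1 ≤ k ∧ k ≤ n ∧ k ≠ n - 1 ∧ (2 ≤ k → 1 < edgeForm n k x))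
    ⟨n, fun k hk => hk.2.2.1⟩
    ⟨(r + 1) % 3 - 1, by omega, by omega, by omega, by omega, by omega⟩
  refine ⟨k, hkr, ⟨h_neg, h_le, h_ne, hx₀' hkr, (hx₁' hkr).le, h_lower, fun h_edge => ?_,
    fun hk hp => ?_⟩, hx₁' hkr⟩
  · have hkr' : (k + 3) % 3 = r % 3 := by omega
    refine lt_of_le_of_ne (le_of_not_gt fun h => ?_) fun h => ?_
    · have := h_max (k + 3) ⟨hkr', by omega, h_edge.le, h_edge.ne, fun _ => h⟩
      omega
    · exact hx ⟨k + 3, h_edge,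
        (mem_edge_iff hn h_edge (by omega)).2 ⟨hx₀' hkr', (hx₁' hkr').le, h⟩⟩
  · by_contra! h
    exact hx ⟨k, ⟨by omega, h_le, h_ne⟩, (mem_wall_iff hn hk).2 ⟨hp, (hx₁' hkr).le, h⟩⟩

lemma ne_zero_of_notMem_spiral (hn : 3 ≤ n) (hx : x ∉ spiral n) : x ≠ 0 := by
  rintro rfl
  exact hx (zero_mem_spiral hn)

lemma exists_inCell (hn : 3 ≤ n) (hx : x ∉ spiral n) : ∃ k, InCell n k x := by
  obtain ⟨r, hx₀, hx₁⟩ := exists_sector (ne_zero_of_notMem_spiral hn hx)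
  obtain ⟨k, -, hk⟩ := exists_inCell_of_sector hn hx hx₀ hx₁
  exact ⟨k, hk⟩

lemma InBand.of_mem_segment (hx : InBand n k x) (hy : InBand n k y) (hz : z ∈ segment ℝ x y) :
    InBand n k z where
  neg_one_le := hx.neg_one_le
  le := hx.le
  ne := hx.ne
  coord_nonneg := le_map_of_mem_segment hx.coord_nonneg hy.coord_nonneg hz
  coord_succ_nonpos := map_le_of_mem_segment hx.coord_succ_nonpos hy.coord_succ_nonpos hz
  lower hk := lt_map_of_mem_segment (hx.lower hk) (hy.lower hk) hz
  upper hk := map_lt_of_mem_segment (hx.upper hk) (hy.upper hk) hz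
  wall hk hz₀ := by
    have hx₀ := hx.coord_nonneg
    have hy₀ := hy.coord_nonneg
    rcases hx₀.eq_or_lt with hx₀ | hx₀ <;> rcases hy₀.eq_or_lt with hy₀ | hy₀
    · exact map_lt_of_mem_segment (hx.wall hk hx₀.symm) (hy.wall hk hy₀.symm) hz
    · rcases lt_map_or_eq_left_of_mem_segment hx₀.le hy₀ hz with h | rfl
      · exact absurd hz₀ h.ne'
      · exact hx.wall hk hz₀
    · rw [segment_symm] at hz
      rcases lt_map_or_eq_left_of_mem_segment hy₀.le hx₀ hz with h | rfl
      · exact absurd hz₀ h.ne'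
      · exact hy.wall hk hz₀
    · exact absurd hz₀ (lt_map_of_mem_segment hx₀ hy₀ hz).ne'

lemma InBand.segment_subset_compl_spiral (hn : 3 ≤ n) (hx : InBand n k x) (hy : InCell n k y)
    (hx_free : x ∉ spiral n) : segment ℝ x y ⊆ (spiral n)ᶜ := by
  intro z hz
  rcases map_lt_or_eq_left_of_mem_segment hx.coord_succ_nonpos hy.coord_succ_neg hz with h | rfl
  · exact InCell.notMem_spiral hn ⟨hx.of_mem_segment hy.toInBand hz, h⟩
  · exact hx_free

end Bands

/-- Two points see each other if the segment joining them avoids the double spiral. -/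
def Visible (n : ℤ) (x y : Plane) : Prop := segment ℝ x y ⊆ (spiral n)ᶜ

/-- The segment from `x` to `y` leaves the cell `k` through the ray which it shares with the
cell `l`. That cell is `k + 2`, except that the outermost cell `n` opens into the cell `n - 4`
rather than into a cell `n + 2`. -/
structure Crosses (n k l : ℤ) (x y : Plane) : Prop where
  index : l = k + 2 ∨ k = n ∧ l = n - 4
  exists_exit : ∃ z ∈ segment ℝ x y, InCell n k z ∧ coord k z = 0

section Visibility

variable {n k l : ℤ} {x y z w : Plane}

lemma Visible.symm (h : Visible n x y) : Visible n y x := by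
  rwa [Visible, segment_symm]

lemma Visible.notMem (h : Visible n x y) (hz : z ∈ segment ℝ x y) : z ∉ spiral n := h hz

lemma Visible.mono (h : Visible n x y) (hz : z ∈ segment ℝ x y) (hw : w ∈ segment ℝ x y) :
    Visible n z w :=
  ((convex_segment x y).segment_subset hz hw).trans h

lemma Visible.left (h : Visible n x y) (hz : z ∈ segment ℝ x y) : Visible n x z :=
  h.mono (left_mem_segment ℝ x y) hz

lemma Visible.right (h : Visible n x y) (hz : z ∈ segment ℝ x y) : Visible n z y :=
  h.mono hz (right_mem_segment ℝ x y)

lemma Visible.one_lt_edgeForm (hn : 3 ≤ n) (h : Visible n x y) (hk : IsEdge n k) (hk2 : 2 ≤ k)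
    (hx₀ : 0 ≤ coord k x) (hx₁ : coord (k + 1) x ≤ 0) (hy₀ : 0 ≤ coord k y)
    (hy₁ : coord (k + 1) y ≤ 0) (hy : 1 < edgeForm n k y) : 1 < edgeForm n k x := by
  by_contra! hx
  obtain ⟨z, hz, h_one⟩ := exists_mem_segment_map_eq (edgeForm n k) hx hy.le
  exact h hz ⟨k, hk, (mem_edge_iff hn hk hk2).2 ⟨le_map_of_mem_segment hx₀ hy₀ hz,
    map_le_of_mem_segment hx₁ hy₁ hz, h_one⟩⟩

lemma Visible.index_le (hn : 3 ≤ n) (h : Visible n x y) (hx : InCell n k x) (hy : InCell n l y)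
    (hkl : k % 3 = l % 3) : l ≤ k := by
  by_contra! hlt
  have h_neg := hx.neg_one_le
  have h_le := hy.le
  have h_ne := hy.ne
  have h_edge : IsEdge n (k + 3) := ⟨by omega, by omega, by omega⟩
  have hk₀ : coord (k + 3) = coord l := coord_congr (by omega)
  have hk₁ : coord (k + 3 + 1) = coord (l + 1) := coord_congr (by omega)
  have hy₀ : 0 ≤ coord (k + 3) y := hk₀ ▸ hy.coord_nonneg
  have hy₁ : coord (k + 3 + 1) y ≤ 0 := hk₁ ▸ hy.coord_succ_nonpos
  have hx₀ : 0 ≤ coord (k + 3) x := coord_add_three k ▸ hx.coord_nonneg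
  have hx₁ : coord (k + 3 + 1) x ≤ 0 := by
    rw [coord_congr (by omega : (k + 3 + 1) % 3 = (k + 1) % 3)]
    exact hx.coord_succ_nonpos
  have h_form : 1 < edgeForm n (k + 3) y := (hy.lower (by omega)).trans_le
    (edgeForm_le_edgeForm n h_edge.nonneg (by omega) (by omega) hy₀ hy₁)
  exact (hx.upper h_edge).not_gt (h.one_lt_edgeForm hn h_edge (by omega) hx₀ hx₁ hy₀ hy₁ h_form)

lemma Visible.index_eq (hn : 3 ≤ n) (h : Visible n x y) (hx : InCell n k x) (hy : InCell n l y)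
    (hkl : k % 3 = l % 3) : k = l :=
  le_antisymm (h.symm.index_le hn hy hx hkl.symm) (h.index_le hn hx hy hkl)

lemma Visible.inCell (hn : 3 ≤ n) (h : Visible n x y) (hx : InCell n k x) (hy₀ : 0 ≤ coord k y)
    (hy₁ : coord (k + 1) y < 0) : InCell n k y := by
  obtain ⟨l, hlk, hy⟩ :=
    exists_inCell_of_sector hn (h.notMem (right_mem_segment ℝ x y)) hy₀ hy₁
  rwa [h.index_eq hn hx hy hlk.symm]

lemma Visible.lt_coord_of_coord_succ_eq_zero (hn : 3 ≤ n) (h : Visible n z y) (hy : InCell n l y)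
    (hl : 2 ≤ l) (hz₀ : 0 ≤ coord l z) (hz₁ : coord (l + 1) z = 0) : l + 2 < coord l z := by
  have := h.one_lt_edgeForm hn (hy.isEdge (by omega)) hl hz₀ hz₁.le hy.coord_nonneg
    hy.coord_succ_nonpos (hy.lower hl)
  rwa [edgeForm_of_coord_succ_eq_zero hz₁,
    one_lt_div (by exact_mod_cast (by omega : 0 < l + 2))] at this

lemma Visible.coord_le_of_coord_succ_eq_zero (hn : 3 ≤ n) (h : Visible n z y) (hy : InCell n l y)
    (hl : IsEdge n (l + 3)) (hz₀ : 0 ≤ coord l z) (hz₁ : coord (l + 1) z = 0) :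
    coord l z ≤ l + 5 := by
  have hl' := hy.neg_one_le
  have h₀ : coord (l + 3) = coord l := coord_add_three l
  have h₁ : coord (l + 3 + 1) = coord (l + 1) := coord_congr (by omega)
  have h_not : ¬ 1 < edgeForm n (l + 3) z := fun hz =>
    (hy.upper hl).not_gt <| h.symm.one_lt_edgeForm hn hl (by omega) (h₀ ▸ hy.coord_nonneg)
      (h₁ ▸ hy.coord_succ_nonpos) (h₀ ▸ hz₀) (h₁ ▸ hz₁.le) hz
  rw [edgeForm_of_coord_succ_eq_zero (h₁ ▸ hz₁), h₀, not_lt,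
    div_le_one (by exact_mod_cast (by omega : 0 < l + 3 + 2))] at h_not
  push_cast at h_not
  linarith

/-- On the ray along `dir (k + 2)`, the edges `k` and `k + 3` bound the cell `k` and the edges `l`
and `l + 3` bound the band `l`; their vertices interlace only in the two cases of the conclusion. -/
lemma Visible.index_of_exit (hn : 3 ≤ n) (h : Visible n z y) (hz : InCell n k z)
    (hz₀ : coord k z = 0) (hy : InCell n l y) (hkl : l % 3 = (k + 2) % 3) :
    l = k + 2 ∨ k = n ∧ l = n - 4 := by
  have hk := hz.neg_one_le
  have hk_ne := hz.ne
  have hl := hy.neg_one_le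
  have hl_le := hy.le
  have hl_ne := hy.ne
  have hz_l : coord l z = -coord (k + 1) z := by
    rw [coord_congr hkl, coord_add_two_apply, hz₀, neg_zero, zero_sub]
  have hz₀' : 0 ≤ coord l z := by linarith [hz.coord_succ_neg]
  have hz₁ : coord (l + 1) z = 0 := by rwa [coord_congr (by omega : (l + 1) % 3 = k % 3)]
  obtain hlk | rfl | hlk : k + 5 ≤ l ∨ l = k + 2 ∨ l ≤ k - 1 := by omega
  · have h_lt := h.lt_coord_of_coord_succ_eq_zero hn hy (by omega) hz₀' hz₁
    have h_far := hz.lt_coord_succ ⟨by omega, by omega, by omega⟩ hz₀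
    rw [next_of_ne (by omega)] at h_far
    push_cast at h_far
    have : l < k + 5 := by exact_mod_cast (by linarith : (l : ℝ) < k + 5)
    omega
  · exact Or.inl rfl
  · have h_exit := hz.coord_succ_lt hn (by omega) hz₀
    have h_edge (hl3 : IsEdge n (l + 3)) : next n k < l + 3 := by
      have := h.coord_le_of_coord_succ_eq_zero hn hy hl3 hz₀' hz₁
      exact_mod_cast (by linarith : (next n k : ℝ) < l + 3)
    rcases eq_or_ne k n with rfl | hkn
    · rw [next_self] at h_edge
      by_contra! h_ne
      have := h_edge ⟨by omega, by omega, by omega⟩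
      omega
    · rw [next_of_ne hkn] at h_exit h_edge
      have hk_le := hz.le
      rcases eq_or_ne (l + 3) (n - 1) with hl3 | hl3
      · obtain rfl : k = n - 3 := by omega
        have h_far := hz.lt_coord_succ ⟨by omega, by omega, by omega⟩ hz₀
        rw [sub_add_cancel, next_self] at h_far
        push_cast at h_far h_exit
        linarith
      · have := h_edge ⟨by omega, by omega, hl3⟩
        omega

lemma Crosses.of_mem_segment (hn : 3 ≤ n) (h : Visible n x y) (hx : InCell n k x)
    (hy : InCell n l y) (hkl : l % 3 = (k + 2) % 3) (hz : z ∈ segment ℝ x y)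
    (hz₀ : coord k z = 0) (hz₁ : coord (k + 1) z ≤ 0) : Crosses n k l x y := by
  have hz_ne : coord (k + 1) z ≠ 0 := fun hz₁ =>
    ne_zero_of_notMem_spiral hn (h.notMem hz) (eq_of_coord_eq k (by simpa) (by simpa))
  have hz_cell : InCell n k z :=
    (h.left hz).inCell hn hx hz₀.ge (lt_of_le_of_ne hz₁ hz_ne)
  exact ⟨(h.right hz).index_of_exit hn hz_cell hz₀ hy hkl, z, hz, hz_cell, hz₀⟩

/-- Either the segment passes directly between the two sectors, or it goes around the origin
through the third one, where it meets the bisector `coord (j + 2) = 0` in `w`. -/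
lemma Visible.crosses_or (hn : 3 ≤ n) (h : Visible n x y) (hx : InCell n k x) (hy : InCell n l y)
    (hkl : l % 3 = (k + 2) % 3) :
    Crosses n k l x y ∨ ∃ j, ∃ w ∈ segment ℝ x y, InCell n j w ∧ coord (j + 2) w = 0 ∧
      Crosses n j k w x ∧ Crosses n l j y w := by
  have hl₁ : coord (l + 1) = coord k := coord_congr (by omega)
  obtain ⟨w, hw, hw₀⟩ := exists_mem_segment_map_eq (coord k) (hl₁ ▸ hy.coord_succ_nonpos)
    hx.coord_nonneg
  rw [segment_symm] at hw
  rcases le_or_gt (coord (k + 1) w) 0 with hw₁ | hw₁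
  · exact Or.inl (.of_mem_segment hn h hx hy hkl hw hw₀ hw₁)
  have hw₂ : coord (k + 1 + 1) w < 0 := by
    rw [add_assoc, one_add_one_eq_two, coord_add_two_apply]
    linarith
  obtain ⟨j, hj, hwj⟩ := exists_inCell_of_sector hn (h.notMem hw) hw₁.le hw₂
  refine Or.inr ⟨j, w, hw, hwj, ?_, ?_, ?_⟩
  · rwa [coord_congr (by omega : (j + 2) % 3 = k % 3)]
  · obtain ⟨v, hv, hv₀⟩ := exists_mem_segment_map_eq (coord (k + 1)) hx.coord_succ_nonpos hw₁.le
    have hv₁ : 0 ≤ coord k v := le_map_of_mem_segment hx.coord_nonneg hw₀.ge hv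
    rw [segment_symm] at hv
    refine .of_mem_segment hn (h.left hw).symm hwj hx (by omega) hv (by rwa [coord_congr hj]) ?_
    rw [coord_congr (by omega : (j + 1) % 3 = (k + 2) % 3), coord_add_two_apply]
    linarith
  · have hl₀ : coord l = coord (k + 1 + 1) := coord_congr (by omega)
    obtain ⟨v, hv, hv₀⟩ := exists_mem_segment_map_eq (coord l) (hl₀ ▸ hw₂.le) hy.coord_nonneg
    have hv₁ : coord (l + 1) v ≤ 0 :=
      map_le_of_mem_segment (hl₁ ▸ hw₀.le) hy.coord_succ_nonpos hv
    rw [segment_symm] at hv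
    exact .of_mem_segment hn (h.right hw).symm hy hwj (by omega) hv hv₀ hv₁

lemma Crosses.emod_two_eq (h : Crosses n k l x y) : k % 2 = l % 2 := by
  have := h.index
  omega

lemma Visible.emod_two_eq (hn : 3 ≤ n) (h : Visible n x y) (hx : InCell n k x)
    (hy : InCell n l y) : k % 2 = l % 2 := by
  have key {k l : ℤ} {x y : Plane} (h : Visible n x y) (hx : InCell n k x) (hy : InCell n l y)
      (hkl : l % 3 = (k + 2) % 3) : k % 2 = l % 2 := by
    rcases h.crosses_or hn hx hy hkl with h | ⟨j, w, -, -, -, hwx, hyw⟩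
    · exact h.emod_two_eq
    · exact hwx.emod_two_eq.symm.trans hyw.emod_two_eq.symm
  obtain hkl | hkl | hkl : k % 3 = l % 3 ∨ l % 3 = (k + 2) % 3 ∨ k % 3 = (l + 2) % 3 := by omega
  · rw [h.index_eq hn hx hy hkl]
  · exact key h hx hy hkl
  · exact (key h.symm hy hx hkl).symm

end Visibility

/-- The union of the cells whose index differs from `n` by `e` modulo `2`. The cells `k` and
`k + 2` are adjacent, so that `corridor n 1` is the bounded and `corridor n 0` the unbounded
complementary region of the double spiral. -/
def corridor (n e : ℤ) : Set Plane := {x | ∃ k, (n - k) % 2 = e ∧ InCell n k x}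

section Points

variable {n k : ℤ} {p q : ℝ}

lemma edgeForm_point (n k : ℤ) (p q : ℝ) :
    edgeForm n k (point k p q) = p / (k + 2) + q / (next n k + 2) := by
  rw [edgeForm_apply, coord_point, coord_succ_point]
  ring

lemma edgeForm_add_three_point (n k : ℤ) (p q : ℝ) :
    edgeForm n (k + 3) (point k p q) = p / (k + 5) + q / (next n (k + 3) + 2) := by
  rw [edgeForm_congr (by omega : k % 3 = (k + 3) % 3), coord_point, coord_succ_point]
  push_cast
  ring

lemma inBand_point (hk : -1 ≤ k) (hkn : k ≤ n) (hkn' : k ≠ n - 1) (hp : 0 ≤ p) (hq : 0 ≤ q)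
    (lower : 2 ≤ k → 1 < p / (k + 2) + q / (next n k + 2))
    (upper : IsEdge n (k + 3) → p / (k + 5) + q / (next n (k + 3) + 2) < 1)
    (wall : k = 0 ∨ k = 1 → p = 0 → k + 4 < q) : InBand n k (point k p q) where
  neg_one_le := hk
  le := hkn
  ne := hkn'
  coord_nonneg := by rwa [coord_point]
  coord_succ_nonpos := by rwa [coord_succ_point, neg_nonpos]
  lower h := edgeForm_point n k p q ▸ lower h
  upper h := edgeForm_add_three_point n k p q ▸ upper h
  wall h hp := by
    rw [coord_succ_point, neg_lt_neg_iff]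
    exact wall h (by rwa [coord_point] at hp)

lemma InBand.inCell_point (h : InBand n k (point k p q)) (hq : 0 < q) : InCell n k (point k p q) :=
  ⟨h, by rwa [coord_succ_point, neg_lt_zero]⟩

end Points

section Corridors

variable {n e k : ℤ} {x y : Plane}

lemma compl_spiral_eq (hn : 3 ≤ n) : (spiral n)ᶜ = corridor n 1 ∪ corridor n 0 := by
  ext x
  constructor
  · intro hx
    obtain ⟨k, hk⟩ := exists_inCell hn hx
    rcases Int.emod_two_eq_zero_or_one (n - k) with h | h
    · exact Or.inr ⟨k, h, hk⟩
    · exact Or.inl ⟨k, h, hk⟩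
  · rintro (⟨k, -, hk⟩ | ⟨k, -, hk⟩) <;> exact hk.notMem_spiral hn

lemma notMem_spiral_of_mem_corridor (hn : 3 ≤ n) (hx : x ∈ corridor n e) : x ∉ spiral n := by
  obtain ⟨k, -, hk⟩ := hx
  exact hk.notMem_spiral hn

lemma visible_self (hx : x ∉ spiral n) : Visible n x x := by
  rwa [Visible, segment_same, singleton_subset_iff]

lemma Visible.mem_corridor (hn : 3 ≤ n) (h : Visible n x y) (hx : x ∈ corridor n e) :
    y ∈ corridor n e := by
  obtain ⟨k, hk, hx⟩ := hx
  obtain ⟨l, hy⟩ := exists_inCell hn (h.notMem (right_mem_segment ℝ x y))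
  have := h.emod_two_eq hn hx hy
  exact ⟨l, by omega, hy⟩

lemma Visible.segment_subset_corridor (hn : 3 ≤ n) (h : Visible n x y) (hx : x ∈ corridor n e) :
    segment ℝ x y ⊆ corridor n e :=
  fun _ hz => (h.left hz).mem_corridor hn hx

lemma visible_of_segment_subset_corridor (hn : 3 ≤ n) (h : segment ℝ x y ⊆ corridor n e) :
    Visible n x y :=
  fun _ hz => notMem_spiral_of_mem_corridor hn (h hz)

lemma disjoint_corridor (hn : 3 ≤ n) : Disjoint (corridor n 1) (corridor n 0) := by
  rw [disjoint_left]
  rintro x ⟨k, hk, hxk⟩ ⟨l, hl, hxl⟩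
  have := (visible_self (hxk.notMem_spiral hn)).emod_two_eq hn hxk hxl
  omega

lemma isClosed_spiral (n : ℤ) : IsClosed (spiral n) := by
  have h_finite : {k | IsEdge n k}.Finite :=
    (finite_Icc 0 n).subset fun k hk => ⟨hk.nonneg, hk.le⟩
  have h_union : spiral n = ⋃ k ∈ {k | IsEdge n k}, edge n k := by
    ext x
    simp [spiral]
  rw [h_union]
  refine h_finite.isClosed_biUnion fun k _ => ?_
  rw [edge, ← convexHull_pair]
  exact (toFinite _).isClosed_convexHull ℝ

lemma isOpen_corridor (hn : 3 ≤ n) (e : ℤ) : IsOpen (corridor n e) := by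
  refine Metric.isOpen_iff.2 fun x hx => ?_
  obtain ⟨ε, hε, h_ball⟩ := Metric.isOpen_iff.1 (isClosed_spiral n).isOpen_compl x
    (notMem_spiral_of_mem_corridor hn hx)
  have h_visible {y : Plane} (hy : y ∈ ball x ε) : Visible n x y :=
    ((convex_ball x ε).segment_subset (mem_ball_self hε) hy).trans h_ball
  exact ⟨ε, hε, fun y hy => (h_visible hy).mem_corridor hn hx⟩

lemma norm_dir_le (k : ℤ) : ‖dir k‖ ≤ 2 := by
  unfold dir
  split_ifs <;> rw [EuclideanSpace.norm_eq, Real.sqrt_le_left (by norm_num)] <;>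
    norm_num [Fin.sum_univ_two]

lemma InCell.coord_le_of_isEdge (h : InCell n k x) (hk : IsEdge n (k + 3)) :
    coord k x ≤ n + 2 ∧ -coord (k + 1) x ≤ n + 2 := by
  have h_next : next n (k + 3) ≤ n := by
    have := hk.le
    have := hk.ne
    unfold next
    split_ifs <;> omega
  have h_next_pos := next_add_two_pos n hk.nonneg
  have hk_pos : (0 : ℝ) < (k + 3 : ℤ) + 2 := by exact_mod_cast (by linarith [hk.nonneg])
  have h_form := h.upper hk
  rw [edgeForm_congr (by omega : k % 3 = (k + 3) % 3)] at h_form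
  have hp := mul_nonneg (inv_pos.2 hk_pos).le h.coord_nonneg
  have hq := mul_nonpos_of_nonneg_of_nonpos (inv_pos.2 h_next_pos).le h.coord_succ_nonpos
  constructor
  · calc coord k x ≤ (k + 3 : ℤ) + 2 := by
          rw [← mul_one (_ + 2 : ℝ), ← inv_mul_le_iff₀ hk_pos]
          linarith
      _ ≤ n + 2 := by
          gcongr
          exact hk.le
  · calc -coord (k + 1) x ≤ next n (k + 3) + 2 := by
          rw [← mul_one (_ + 2 : ℝ), ← inv_mul_le_iff₀ h_next_pos]
          linarith
      _ ≤ n + 2 := by gcongr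

lemma isBounded_corridor_one (hn : 3 ≤ n) : Bornology.IsBounded (corridor n 1) := by
  refine isBounded_iff_forall_norm_le.2 ⟨(n + 2) * 2 + (n + 2) * 2, ?_⟩
  rintro x ⟨k, hk, hx⟩
  have h_le := hx.le
  have h_ne := hx.ne
  have h_neg := hx.neg_one_le
  obtain ⟨hp, hq⟩ := hx.coord_le_of_isEdge ⟨by omega, by omega, by omega⟩
  have hp₀ := hx.coord_nonneg
  have hq₀ := hx.coord_succ_nonpos
  calc ‖x‖ = ‖coord k x • dir k - coord (k + 1) x • dir (k - 1)‖ := by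
        rw [← eq_coord_smul_dir]
    _ ≤ ‖coord k x • dir k‖ + ‖coord (k + 1) x • dir (k - 1)‖ := norm_sub_le _ _
    _ ≤ (n + 2) * 2 + (n + 2) * 2 := by
        rw [norm_smul, norm_smul, Real.norm_of_nonneg hp₀, Real.norm_of_nonpos hq₀]
        gcongr <;> exact norm_dir_le _

lemma inCell_far (hn : 3 ≤ n) {c : ℝ} (hc : n + 2 < c) : InCell n (n - 2) (point (n - 2) 0 c) := by
  have hn' : (3 : ℝ) ≤ n := by exact_mod_cast hn
  refine (inBand_point (by omega) (by omega) (by omega) le_rfl (by linarith) (fun _ => ?_)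
    (fun h => by have := h.le; omega) fun _ _ => ?_).inCell_point (by linarith)
  · rw [next_of_ne (by omega), zero_div, zero_add]
    push_cast
    rw [one_lt_div (by linarith)]
    linarith
  · push_cast
    linarith

lemma not_isBounded_corridor_zero (hn : 3 ≤ n) : ¬ Bornology.IsBounded (corridor n 0) := by
  intro h
  obtain ⟨C, hC⟩ := isBounded_iff_forall_norm_le.1
    ((coord (n - 2 + 1)).lipschitz.isBounded_image h)
  have := hC _ (mem_image_of_mem _ ⟨n - 2, by omega, inCell_far hn (c := |C| + n + 3) (by
    linarith [abs_nonneg C])⟩)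
  rw [coord_succ_point, norm_neg] at this
  have hn' : (3 : ℝ) ≤ n := by exact_mod_cast hn
  linarith [le_abs_self C, Real.le_norm_self (|C| + n + 3)]

end Corridors

section UpperBounds

variable {n e k l : ℤ} {x y : Plane}

lemma point_zero_left (k : ℤ) (q : ℝ) : point k 0 q = point (k + 2) q 0 := by
  rw [point, point, zero_smul, zero_smul, zero_add, add_zero,
    dir_congr (by omega : (k - 1) % 3 = (k + 2) % 3)]

/-- A point of the gap through which the cell `k` opens into the cell `k + 2`. -/
noncomputable def window (k : ℤ) : Plane := point k 0 (k + 9 / 2)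

lemma inCell_window (hk : -1 ≤ k) (hkn : k + 2 ≤ n) (hkn' : k + 2 ≠ n - 1) :
    InCell n k (window k) := by
  have hk' : (-1 : ℝ) ≤ k := by exact_mod_cast hk
  refine (inBand_point hk (by omega) (by omega) le_rfl (by linarith) (fun _ => ?_) (fun _ => ?_)
    fun _ _ => by linarith).inCell_point (by linarith)
  · rw [next_of_ne (by omega), zero_div, zero_add]
    push_cast
    rw [one_lt_div (by linarith)]
    linarith
  · rw [next_of_ne (by omega), zero_div, zero_add]
    push_cast
    rw [div_lt_one (by linarith)]
    linarith

lemma inBand_window (hk : -1 ≤ k) (hkn : k + 2 ≤ n) (hkn' : k + 2 ≠ n - 1) :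
    InBand n (k + 2) (window k) := by
  have hk' : (-1 : ℝ) ≤ k := by exact_mod_cast hk
  rw [window, point_zero_left]
  refine inBand_point (by omega) hkn hkn' (by linarith) le_rfl (fun _ => ?_) (fun _ => ?_)
    fun _ h => by linarith
  · rw [zero_div, add_zero]
    push_cast
    rw [one_lt_div (by linarith)]
    linarith
  · rw [zero_div, add_zero]
    push_cast
    rw [div_lt_one (by linarith)]
    linarith

lemma InBand.polyPath (hn : 3 ≤ n) (j : ℕ) (hx : InBand n k x) (hx_free : x ∉ spiral n)
    (hy : InCell n (k + 2 * j) y) (he : (n - k) % 2 = e) :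
    PolyPath (corridor n e) x y (j + 1) := by
  have segment_subset {k : ℤ} {x y : Plane} (hx : InBand n k x) (hx_free : x ∉ spiral n)
      (hy : InCell n k y) (he : (n - k) % 2 = e) : segment ℝ x y ⊆ corridor n e := by
    rw [segment_symm]
    exact Visible.segment_subset_corridor hn
      (Visible.symm (hx.segment_subset_compl_spiral hn hy hx_free)) ⟨k, he, hy⟩
  induction j generalizing k x with
  | zero => exact .single (segment_subset hx hx_free (by simpa using hy) he)
  | succ j ih =>
    have hk := hx.neg_one_le
    have hy_le := hy.le
    have hy_ne := hy.ne
    push_cast at hy hy_le hy_ne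
    have h_window : InCell n k (window k) := inCell_window hk (by omega) (by omega)
    refine .cons (segment_subset hx hx_free h_window he)
      (ih (inBand_window hk (by omega) (by omega)) (h_window.notMem_spiral hn) ?_ (by omega))
    rwa [show k + 2 + 2 * (j : ℤ) = k + 2 * (j + 1) by ring]

lemma InCell.exists_polyPath (hn : 3 ≤ n) (hx : InCell n k x) (hy : InCell n l y)
    (hk : (n - k) % 2 = e) (hl : (n - l) % 2 = e) (hkl : k ≤ l) :
    ∃ m : ℕ, 2 * m = l - k + 2 ∧ PolyPath (corridor n e) x y m := by
  obtain ⟨j, hj⟩ := Int.eq_ofNat_of_zero_le (by omega : 0 ≤ (l - k) / 2)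
  obtain rfl : l = k + 2 * j := by omega
  exact ⟨j + 1, by push_cast; ring, hx.toInBand.polyPath hn j (hx.notMem_spiral hn) hy hk⟩

lemma exists_polyPath_corridor_one (hn : 3 ≤ n) (hx : x ∈ corridor n 1) (hy : y ∈ corridor n 1) :
    ∃ m : ℕ, 2 * m ≤ n ∧ PolyPath (corridor n 1) x y m := by
  obtain ⟨k, hk, hx⟩ := hx
  obtain ⟨l, hl, hy⟩ := hy
  wlog hkl : k ≤ l generalizing k l x y
  · obtain ⟨m, hm, h⟩ := this l hl hy k hk hx (by omega)
    exact ⟨m, hm, h.symm⟩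
  obtain ⟨m, hm, h⟩ := hx.exists_polyPath hn hy hk hl hkl
  have := hx.neg_one_le
  have := hy.le
  have := hy.ne
  exact ⟨m, by omega, h⟩

/-- A point of the cell `n - 4` so far out that it sees the whole cell `n`. -/
noncomputable def hub (n : ℤ) : Plane := point (n - 4) (2 * n + 4) 1

lemma coord_hub (n : ℤ) : coord n (hub n) = -1 := by
  rw [coord_congr (by omega : n % 3 = (n - 4 + 1) % 3), hub, coord_succ_point]

lemma coord_succ_hub (n : ℤ) : coord (n + 1) (hub n) = -(2 * n + 3) := by
  rw [coord_congr (by omega : (n + 1) % 3 = (n - 4 + 2) % 3), hub, coord_add_two_apply,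
    coord_point, coord_succ_point]
  ring

lemma one_lt_edgeForm_hub (hn : 3 ≤ n) : 1 < edgeForm n n (hub n) := by
  have hn' : (3 : ℝ) ≤ n := by exact_mod_cast hn
  rw [edgeForm_apply, coord_hub, coord_succ_hub, next_self]
  push_cast
  have h₁ : (n + 2 : ℝ)⁻¹ < 1 := inv_lt_one_of_one_lt₀ (by linarith)
  have h₂ : 2 ≤ (n - 1 + 2 : ℝ)⁻¹ * (2 * n + 3) := by
    rw [le_inv_mul_iff₀ (by linarith)]
    linarith
  linarith

lemma inCell_sub_four (hn : 3 ≤ n) (hx₀ : coord n x < 0) (hx₁ : coord (n + 1) x < -(n + 1)) :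
    InCell n (n - 4) x := by
  have hn' : (3 : ℝ) ≤ n := by exact_mod_cast hn
  have h₀ : n + 1 < coord (n - 4) x := by
    rw [coord_congr (by omega : (n - 4) % 3 = (n + 2) % 3), coord_add_two_apply]
    linarith
  have h₁ : coord (n - 4 + 1) x < 0 := by
    rwa [coord_congr (by omega : (n - 4 + 1) % 3 = n % 3)]
  refine ⟨⟨by omega, by omega, by omega, by linarith, h₁.le, fun hk => ?_, fun h => ?_,
    fun _ hx => by linarith⟩, h₁⟩
  · have h_succ : (next n (n - 4) + 2 : ℝ)⁻¹ * coord (n - 4 + 1) x ≤ 0 :=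
      mul_nonpos_of_nonneg_of_nonpos (inv_pos.2 (next_add_two_pos n (by omega))).le h₁.le
    have hk' : (2 : ℝ) ≤ n - 4 := by exact_mod_cast hk
    have h_self : 1 < ((n - 4 : ℤ) + 2 : ℝ)⁻¹ * coord (n - 4) x := by
      push_cast
      rw [lt_inv_mul_iff₀ (by linarith)]
      linarith
    rw [edgeForm_apply]
    linarith
  · exact absurd (by ring) h.ne

lemma inCell_hub (hn : 3 ≤ n) : InCell n (n - 4) (hub n) := by
  have hn' : (3 : ℝ) ≤ n := by exact_mod_cast hn
  refine inCell_sub_four hn ?_ ?_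
  · rw [coord_hub]
    linarith
  · rw [coord_succ_hub]
    linarith

lemma visible_hub (hn : 3 ≤ n) (hx : InCell n n x) : Visible n x (hub n) := by
  intro z hz
  have hn' : (3 : ℝ) ≤ n := by exact_mod_cast hn
  have h_form : 1 < edgeForm n n z :=
    lt_map_of_mem_segment (hx.lower (by omega)) (one_lt_edgeForm_hub hn) hz
  have hz₁ : coord (n + 1) z < 0 :=
    map_lt_of_mem_segment hx.coord_succ_neg (by rw [coord_succ_hub]; linarith) hz
  rcases le_or_gt 0 (coord n z) with hz₀ | hz₀
  · exact InCell.notMem_spiral hn ⟨⟨by omega, le_rfl, by omega, hz₀, hz₁.le, fun _ => h_form,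
      fun h => absurd h.le (by omega), fun h => by omega⟩, hz₁⟩
  · refine (inCell_sub_four hn hz₀ ?_).notMem_spiral hn
    have h_self : (n + 2 : ℝ)⁻¹ * coord n z < 0 :=
      mul_neg_of_pos_of_neg (inv_pos.2 (by linarith)) hz₀
    have h_succ : 1 < (n + 1 : ℝ)⁻¹ * -coord (n + 1) z := by
      rw [edgeForm_apply, next_self] at h_form
      push_cast at h_form
      rw [show (n - 1 + 2 : ℝ) = n + 1 by ring] at h_form
      linarith
    rw [lt_inv_mul_iff₀ (by linarith)] at h_succ
    linarith

lemma exists_polyPath_corridor_zero (hn : 3 ≤ n) (hx : x ∈ corridor n 0) (hy : y ∈ corridor n 0) :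
    ∃ m : ℕ, 2 * m ≤ n + 1 ∧ PolyPath (corridor n 0) x y m := by
  obtain ⟨k, hk, hx⟩ := hx
  obtain ⟨l, hl, hy⟩ := hy
  wlog hkl : k ≤ l generalizing k l x y
  · obtain ⟨m, hm, h⟩ := this l hl hy k hk hx (by omega)
    exact ⟨m, hm, h.symm⟩
  have hk_neg := hx.neg_one_le
  have hl_le := hy.le
  by_cases h_hub : l = n ∧ k ≤ n - 4
  · obtain ⟨rfl, hk4⟩ := h_hub
    obtain ⟨m, hm, h⟩ := hx.exists_polyPath hn (inCell_hub hn) hk (by omega) hk4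
    have h_last := (visible_hub hn hy).segment_subset_corridor hn ⟨l, hl, hy⟩
    exact ⟨m + 1, by push_cast; omega, (h.symm.cons h_last).symm⟩
  · obtain ⟨m, hm, h⟩ := hx.exists_polyPath hn hy hk hl hkl
    exact ⟨m, by omega, h⟩

end UpperBounds

/-- The part of the cell `k` on the near side of a ray separating its two ends. A segment starting
there cannot get past the corresponding ray of the cell `k + 2`. The slopes of the rays are chosen
such that this holds in the narrow innermost cell `-1` as well. -/
def BeforeCut (k : ℤ) (x : Plane) : Prop :=
  if k = -1 then -3 * coord (k + 1) x ≤ coord k x else -2 * coord (k + 1) x ≤ 3 * coord k x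

/-- The cells of the parity of `m` up to the cut of the cell `m`. -/
def reach (n m : ℤ) : Set Plane :=
  {x | ∃ k, InCell n k x ∧ k % 2 = m % 2 ∧ (k < m ∨ k = m ∧ BeforeCut k x)}

section Cuts

variable {n k l m : ℤ} {x y z w : Plane}

lemma beforeCut_neg_one : BeforeCut (-1) x ↔ -3 * coord (-1 + 1) x ≤ coord (-1) x := by
  rw [BeforeCut, if_pos rfl]

lemma beforeCut_iff (hk : 0 ≤ k) : BeforeCut k x ↔ -2 * coord (k + 1) x ≤ 3 * coord k x := by
  rw [BeforeCut, if_neg (by omega)]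

lemma InCell.not_beforeCut (h : InCell n k x) (hx : coord k x = 0) : ¬ BeforeCut k x := by
  have := h.coord_succ_neg
  unfold BeforeCut
  split_ifs <;> rw [hx] <;> linarith

lemma InCell.beforeCut_of_bisector (h : InCell n k x) (hk : 0 ≤ k) (hx : coord (k + 2) x = 0) :
    BeforeCut k x := by
  have := h.coord_nonneg
  rw [coord_add_two_apply] at hx
  rw [beforeCut_iff hk]
  linarith

lemma coord_eq_of_add_two (k : ℤ) (y : Plane) : coord k y = coord (k + 2 + 1) y := by
  rw [coord_congr (by omega : (k + 2 + 1) % 3 = k % 3)]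

lemma coord_succ_eq_of_add_two (k : ℤ) (y : Plane) :
    coord (k + 1) y = -coord (k + 2 + 1) y - coord (k + 2) y := by
  rw [← coord_eq_of_add_two, coord_add_two_apply]
  ring

lemma InCell.lt_coord_succ_of_beforeCut (h : InCell n k x) (hx : BeforeCut k x) (hk : 0 ≤ k)
    (hkn : k ≤ n - 5) : -(k + 4) < coord (k + 1) x := by
  have hk' : (0 : ℝ) ≤ k := by exact_mod_cast hk
  have h_form := h.upper ⟨by omega, by omega, by omega⟩
  rw [beforeCut_iff hk] at hx
  rw [edgeForm_congr (by omega : k % 3 = (k + 3) % 3), next_of_ne (by omega)] at h_form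
  push_cast at h_form
  field_simp at h_form
  nlinarith

lemma BeforeCut.of_crosses (hn : 3 ≤ n) (hx_cut : BeforeCut k x) (h : Crosses n k (k + 2) x y)
    (hx : InCell n k x) (hy : InCell n (k + 2) y) (hkn : k ≤ n - 5) : BeforeCut (k + 2) y := by
  obtain ⟨z, hz, hz_cell, hz₀⟩ := h.exists_exit
  by_contra hy_cut
  have hk := hx.neg_one_le
  rw [beforeCut_iff (by omega), not_le] at hy_cut
  have hy₁ := coord_succ_eq_of_add_two k y
  have hy_neg := hy.coord_succ_neg
  obtain rfl | hk : k = -1 ∨ 0 ≤ k := by omega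
  · have hy₀ := coord_eq_of_add_two (-1) y
    let f : Plane →L[ℝ] ℝ := coord (-1) + (3 : ℝ) • coord (-1 + 1)
    have hf (v : Plane) : f v = coord (-1) v + 3 * coord (-1 + 1) v := rfl
    rw [beforeCut_neg_one] at hx_cut
    have hfx : 0 ≤ f x := by linarith [hf x]
    have hfy : 0 ≤ f y := by linarith [hf y]
    linarith [hf z, le_map_of_mem_segment hfx hfy hz, hz_cell.coord_succ_neg]
  · have h_lt : -(k + 4) < coord (k + 1) z := by
      refine lt_map_of_mem_segment (hx.lt_coord_succ_of_beforeCut hx_cut hk hkn) ?_ hz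
      have hk' : (0 : ℝ) ≤ k := by exact_mod_cast hk
      linarith
    have h_exit := hz_cell.coord_succ_lt hn hk hz₀
    rw [next_of_ne (by omega)] at h_exit
    push_cast at h_exit
    linarith

lemma Crosses.eq_add_two (h : Crosses n k l x y) (hk : k ≠ n) : l = k + 2 :=
  h.index.resolve_right fun h => hk h.1

lemma Visible.crosses_add_two (hn : 3 ≤ n) (h : Visible n x y) (hx : InCell n k x)
    (hy : InCell n (k + 2) y) (hk : k ≤ n - 5) : Crosses n k (k + 2) x y := by
  refine (h.crosses_or hn hx hy rfl).resolve_right ?_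
  rintro ⟨j, w, -, -, -, hwx, hyw⟩
  have := hwx.index
  have := hyw.index
  omega

lemma Visible.index_cases (hn : 3 ≤ n) (h : Visible n x y) (hx : InCell n k x) (hy : InCell n l y)
    (hk : k ≤ n - 4) (hkl : k = n - 4 → l ≠ n) : l ≤ k ∨ l = k + 2 ∨
      l = k + 4 ∧ ∃ w ∈ segment ℝ x y, InCell n (k + 2) w ∧ coord (k + 2 + 2) w = 0 ∧
        Crosses n (k + 2) l w y := by
  obtain h_emod | h_emod | h_emod :
      k % 3 = l % 3 ∨ l % 3 = (k + 2) % 3 ∨ k % 3 = (l + 2) % 3 := by omega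
  · exact Or.inl (h.index_eq hn hx hy h_emod).ge
  · rcases h.crosses_or hn hx hy h_emod with hxy | ⟨j, w, -, -, -, hwx, hyw⟩
    · exact Or.inr (Or.inl (hxy.eq_add_two (by omega)))
    · have := hwx.index
      have := hyw.index
      omega
  · rcases h.symm.crosses_or hn hy hx h_emod with hyx | ⟨j, w, hw, hw_cell, hw₀, hwy, hxw⟩
    · have := hyx.index
      omega
    · obtain rfl := hxw.eq_add_two (by omega)
      have := hwy.eq_add_two (by omega)
      rw [segment_symm] at hw
      exact Or.inr (Or.inr ⟨by omega, w, hw, hw_cell, hw₀, hwy⟩)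

lemma mem_reach_of_visible (hn : 3 ≤ n) (hm : m ≤ n - 5) (hx : x ∈ reach n m)
    (h : Visible n x y) : y ∈ reach n (m + 2) := by
  obtain ⟨k, hx, hk_emod, hkm⟩ := hx
  obtain ⟨l, hy⟩ := exists_inCell hn (h.notMem (right_mem_segment ℝ x y))
  have hl_emod := h.emod_two_eq hn hx hy
  refine ⟨l, hy, by omega, ?_⟩
  have hk_neg := hx.neg_one_le
  obtain hl | rfl | ⟨rfl, w, hw, hw_cell, hw₀, hwy⟩ :=
    h.index_cases hn hx hy (by omega) (by omega)
  · omega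
  · rcases hkm with hkm | ⟨rfl, hx_cut⟩
    · omega
    · exact Or.inr ⟨rfl, hx_cut.of_crosses hn (h.crosses_add_two hn hx hy hm) hx hy hm⟩
  · rcases hkm with hkm | ⟨rfl, hx_cut⟩
    · obtain hkm | rfl : k + 4 < m + 2 ∨ m = k + 2 := by omega
      · exact Or.inl hkm
      · rw [show k + 4 = k + 2 + 2 by ring] at hy hwy ⊢
        exact Or.inr ⟨rfl, (hw_cell.beforeCut_of_bisector (by omega) hw₀).of_crosses hn hwy
          hw_cell hy hm⟩
    · obtain ⟨z, hz, hz_cell, hz₀⟩ := hwy.exists_exit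
      have hz_visible : Visible n x z :=
        h.left ((convex_segment x y).segment_subset hw (right_mem_segment ℝ x y) hz)
      exact absurd (hx_cut.of_crosses hn (hz_visible.crosses_add_two hn hx hz_cell hm) hx hz_cell
        hm) (hz_cell.not_beforeCut hz₀)

lemma InCell.index_eq (hn : 3 ≤ n) (hk : InCell n k x) (hl : InCell n l x) : k = l := by
  refine (visible_self (hk.notMem_spiral hn)).index_eq hn hk hl ?_
  obtain h | ⟨h, hx⟩ := emod_eq_or_of_sectors hk.coord_nonneg hk.coord_succ_neg hl.coord_nonneg
    hl.coord_succ_nonpos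
  · exact h.symm
  · have := hl.coord_succ_neg
    rw [coord_congr (by omega : (l + 1) % 3 = k % 3)] at this
    linarith

end Cuts

/-- An end point of the two diametral pairs, for `s = 0` and `s = -1`. -/
noncomputable def start (s : ℤ) : Plane := point s 3 1

/-- The end point of the diametral pair of the interior opposite to the starting point. -/
noncomputable def interiorEnd (n : ℤ) : Plane := point (n - 3) (n / 4) (3 * (n + 1) / 4)

/-- The end point of the diametral pair of the exterior opposite to the starting point. -/
noncomputable def exteriorEnd (n : ℤ) : Plane := point (n - 2) (n / 2) n

section LowerBounds

variable {n m s : ℤ} {x : Plane}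

lemma inCell_start (hn : 3 ≤ n) (hs : s = 0 ∨ s = -1) : InCell n s (start s) := by
  refine (inBand_point (by omega) (by omega) (by omega) (by norm_num) zero_le_one
    (fun h => by omega) (fun _ => ?_) fun _ h => by norm_num at h).inCell_point one_pos
  rcases hs with rfl | rfl
  · have h_next : 2 ≤ next n (0 + 3) := by
      unfold next
      split_ifs <;> omega
    have h_inv : 1 / (next n (0 + 3) + 2 : ℝ) ≤ 1 / 4 := by
      gcongr
      exact_mod_cast (by omega : 4 ≤ next n (0 + 3) + 2)
    push_cast
    linarith
  · rw [next_of_ne (by omega)]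
    norm_num

lemma start_mem_reach (hn : 3 ≤ n) (hs : s = 0 ∨ s = -1) : start s ∈ reach n s := by
  refine ⟨s, inCell_start hn hs, rfl, Or.inr ⟨rfl, ?_⟩⟩
  rw [BeforeCut, start, coord_point, coord_succ_point]
  split_ifs <;> norm_num

lemma inCell_interiorEnd (hn : 3 ≤ n) : InCell n (n - 3) (interiorEnd n) := by
  have hn' : (3 : ℝ) ≤ n := by exact_mod_cast hn
  refine (inBand_point (by omega) (by omega) (by omega) (by linarith) (by linarith) (fun h => ?_)
    (fun _ => ?_) fun _ _ => by linarith).inCell_point (by linarith)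
  · have h' : (2 : ℝ) ≤ n - 3 := by exact_mod_cast h
    rw [next_of_ne (by omega)]
    push_cast
    field_simp
    nlinarith
  · rw [sub_add_cancel, next_self]
    push_cast
    rw [show (n - 3 + 5 : ℝ) = n + 2 by ring, show (n - 1 + 2 : ℝ) = n + 1 by ring]
    field_simp
    linarith

lemma not_beforeCut_interiorEnd (hn : 3 ≤ n) : ¬ BeforeCut (n - 3) (interiorEnd n) := by
  have hn' : (3 : ℝ) ≤ n := by exact_mod_cast hn
  rw [beforeCut_iff (by omega), interiorEnd, coord_point, coord_succ_point]
  linarith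

lemma inCell_exteriorEnd (hn : 3 ≤ n) : InCell n (n - 2) (exteriorEnd n) := by
  have hn' : (3 : ℝ) ≤ n := by exact_mod_cast hn
  refine (inBand_point (by omega) (by omega) (by omega) (by linarith) (by linarith) (fun _ => ?_)
    (fun h => absurd h.le (by omega)) fun _ _ => by linarith).inCell_point (by linarith)
  rw [next_of_ne (by omega)]
  push_cast
  rw [sub_add_cancel]
  field_simp
  linarith

lemma not_crosses_exteriorEnd (hn : 3 ≤ n) (hx_cut : BeforeCut (n - 4) x) :
    ¬ Crosses n (n - 4) (n - 2) x (exteriorEnd n) := by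
  rintro ⟨-, z, hz, hz_cell, hz₀⟩
  have hn' : (3 : ℝ) ≤ n := by exact_mod_cast hn
  have h₀ : coord (n - 4) (exteriorEnd n) = -n := by
    rw [coord_congr (by omega : (n - 4) % 3 = (n - 2 + 1) % 3), exteriorEnd, coord_succ_point]
  have h₁ : coord (n - 4 + 1) (exteriorEnd n) = n / 2 := by
    rw [coord_congr (by omega : (n - 4 + 1) % 3 = (n - 2 + 2) % 3), coord_add_two_apply,
      exteriorEnd, coord_succ_point, coord_point]
    ring
  obtain rfl | hn4 : n = 3 ∨ 4 ≤ n := by omega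
  · let f : Plane →L[ℝ] ℝ := coord (3 - 4) + (3 : ℝ) • coord (3 - 4 + 1)
    have hf (v : Plane) : f v = coord (3 - 4) v + 3 * coord (3 - 4 + 1) v := rfl
    have hx_slope : -3 * coord (3 - 4 + 1) x ≤ coord (3 - 4) x := beforeCut_neg_one.1 hx_cut
    have hfx : 0 ≤ f x := by linarith [hf x]
    have hfb : 0 ≤ f (exteriorEnd 3) := by
      rw [hf, h₀, h₁]
      norm_num
    linarith [hf z, le_map_of_mem_segment hfx hfb hz, hz_cell.coord_succ_neg]
  · let f : Plane →L[ℝ] ℝ := (3 : ℝ) • coord (n - 4) + (2 : ℝ) • coord (n - 4 + 1)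
    have hf (v : Plane) : f v = 3 * coord (n - 4) v + 2 * coord (n - 4 + 1) v := rfl
    rw [beforeCut_iff (by omega)] at hx_cut
    have hfx : -(2 * n) ≤ f x := by linarith [hf x]
    have hfb : -(2 * n) ≤ f (exteriorEnd n) := by
      rw [hf, h₀, h₁]
      linarith
    have h_exit := hz_cell.coord_succ_lt hn (by omega) hz₀
    rw [next_of_ne (by omega)] at h_exit
    push_cast at h_exit
    linarith [hf z, le_map_of_mem_segment hfx hfb hz]

lemma not_crosses_of_exteriorEnd (hn : 3 ≤ n) (hx : coord (n + 2) x = 0) :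
    ¬ Crosses n (n - 2) n (exteriorEnd n) x := by
  rintro ⟨-, z, hz, hz_cell, hz₀⟩
  have hn' : (3 : ℝ) ≤ n := by exact_mod_cast hn
  have h_le : -n ≤ coord (n - 2 + 1) z := by
    refine le_map_of_mem_segment ?_ ?_ hz
    · rw [exteriorEnd, coord_succ_point]
    · rw [coord_congr (by omega : (n - 2 + 1) % 3 = (n + 2) % 3), hx]
      linarith
  have h_exit := hz_cell.coord_succ_lt hn (by omega) hz₀
  rw [next_of_ne (by omega)] at h_exit
  push_cast at h_exit
  linarith

lemma not_visible_exteriorEnd (hn : 3 ≤ n) (hx : x ∈ reach n m) (hm : m ≤ n - 4)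
    (h_emod : m % 2 = n % 2) : ¬ Visible n x (exteriorEnd n) := by
  intro h
  obtain ⟨k, hx, hk_emod, hkm⟩ := hx
  have hb := inCell_exteriorEnd hn
  have hk_neg := hx.neg_one_le
  obtain hl | hl | ⟨hl, w, -, hw_cell, hw₀, hwb⟩ :=
    h.index_cases hn hx hb (by omega) (by omega)
  · omega
  · obtain rfl : k = n - 4 := by omega
    have hx_cut : BeforeCut (n - 4) x := by
      rcases hkm with hkm | ⟨-, hx_cut⟩
      · omega
      · exact hx_cut
    rcases h.crosses_or hn hx hb (by omega) with hxb | ⟨j, w, -, -, hw₀, -, hbw⟩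
    · exact not_crosses_exteriorEnd hn hx_cut hxb
    · obtain rfl : j = n := by
        have := hbw.index
        omega
      exact not_crosses_of_exteriorEnd hn hw₀ hbw
  · obtain rfl : k = n - 6 := by omega
    rw [show n - 6 + 2 = n - 4 by ring] at hw_cell hw₀ hwb
    exact not_crosses_exteriorEnd hn (hw_cell.beforeCut_of_bisector (by omega) hw₀) hwb

lemma exists_forall_polyPath_corridor_one (hn : 3 ≤ n) :
    ∃ a ∈ corridor n 1, ∃ b ∈ corridor n 1,
      ∀ m : ℕ, PolyPath (corridor n 1) a b m → n ≤ 2 * m + 1 := by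
  obtain ⟨s, hs, hs_emod⟩ : ∃ s : ℤ, (s = 0 ∨ s = -1) ∧ (n - s) % 2 = 1 := by
    rcases Int.emod_two_eq_zero_or_one n with h | h
    · exact ⟨-1, by omega⟩
    · exact ⟨0, by omega⟩
  refine ⟨start s, ⟨s, hs_emod, inCell_start hn hs⟩, interiorEnd n,
    ⟨n - 3, by omega, inCell_interiorEnd hn⟩, fun m h => ?_⟩
  by_contra! hm
  obtain ⟨k, hk, -, hkm⟩ := h.mem_of_forall_step (fun i => reach n (s + 2 * i))
    (by simpa using start_mem_reach hn hs) fun i hi x hx y hxy => by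
      push_cast
      rw [mul_add, ← add_assoc]
      exact mem_reach_of_visible hn (by omega) hx (visible_of_segment_subset_corridor hn hxy)
  obtain rfl := hk.index_eq hn (inCell_interiorEnd hn)
  rcases hkm with hkm | ⟨-, h_cut⟩
  · omega
  · exact not_beforeCut_interiorEnd hn h_cut

lemma exists_forall_polyPath_corridor_zero (hn : 3 ≤ n) :
    ∃ a ∈ corridor n 0, ∃ b ∈ corridor n 0,
      ∀ m : ℕ, PolyPath (corridor n 0) a b m → n ≤ 2 * m := by
  obtain ⟨s, hs, hs_emod⟩ : ∃ s : ℤ, (s = 0 ∨ s = -1) ∧ (n - s) % 2 = 0 := by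
    rcases Int.emod_two_eq_zero_or_one n with h | h
    · exact ⟨0, by omega⟩
    · exact ⟨-1, by omega⟩
  refine ⟨start s, ⟨s, hs_emod, inCell_start hn hs⟩, exteriorEnd n,
    ⟨n - 2, by omega, inCell_exteriorEnd hn⟩, fun m h => ?_⟩
  by_contra! hm
  have h_ne : start s ≠ exteriorEnd n := fun h_eq => by
    have := (inCell_start hn hs).index_eq hn (h_eq ▸ inCell_exteriorEnd hn)
    omega
  refine (h.mem_of_forall_step
    (fun i => {x | (s + 2 * i ≤ n - 4 → x ∈ reach n (s + 2 * i)) ∧ x ≠ exteriorEnd n})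
    ⟨fun _ => by simpa using start_mem_reach hn hs, h_ne⟩ ?_).2 rfl
  rintro i hi x ⟨hx, -⟩ y hxy
  have h_visible := visible_of_segment_subset_corridor hn hxy
  refine ⟨fun h_le => ?_, ?_⟩
  · push_cast at h_le ⊢
    rw [mul_add, ← add_assoc]
    exact mem_reach_of_visible hn (by omega) (hx (by omega)) h_visible
  · rintro rfl
    exact not_visible_exteriorEnd hn (hx (by omega)) (by omega) (by omega) h_visible

end LowerBounds

section Vertices

variable {n k l m : ℤ} {x : Plane}

lemma radius_nonneg (k : ℤ) : 0 ≤ radius k := by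
  rcases le_or_gt k 1 with hk | hk
  · rw [radius_of_le_one hk]
  · rw [radius_of_two_le hk]
    exact_mod_cast (by omega : 0 ≤ k + 2)

lemma vertex_eq_point (k : ℤ) : vertex k = point k (radius k) 0 := by
  rw [vertex, point, zero_smul, add_zero]

lemma coord_vertex (k : ℤ) : coord k (vertex k) = radius k := by
  rw [vertex_eq_point, coord_point]

lemma coord_succ_vertex (k : ℤ) : coord (k + 1) (vertex k) = 0 := by
  rw [vertex_eq_point, coord_succ_point, neg_zero]

lemma coord_add_two_vertex (k : ℤ) : coord (k + 2) (vertex k) = -radius k := by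
  rw [coord_add_two_apply, coord_vertex, coord_succ_vertex, sub_zero]

lemma vertex_of_le_one (hk : k ≤ 1) : vertex k = 0 := by
  rw [vertex, radius_of_le_one hk, zero_smul]

lemma radius_injOn : InjOn radius {k | 0 ≤ k ∧ k ≠ 1} := by
  rintro k ⟨hk, hk'⟩ l ⟨hl, hl'⟩ h
  unfold radius at h
  split_ifs at h <;> norm_cast at h <;> omega

lemma radius_eq_of_vertex_eq (h : vertex k = vertex l) : radius k = radius l := by
  have hk := radius_nonneg k
  have hl := radius_nonneg l
  have h₀ : coord l (vertex k) = radius l := by rw [h, coord_vertex]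
  have h₁ : coord (l + 1) (vertex k) = 0 := by rw [h, coord_succ_vertex]
  obtain hkl | hkl | hkl : l % 3 = k % 3 ∨ l % 3 = (k + 1) % 3 ∨ l % 3 = (k + 2) % 3 := by omega
  · rw [← h₀, coord_congr hkl, coord_vertex]
  · rw [coord_congr hkl, coord_succ_vertex] at h₀
    rw [coord_congr (by omega : (l + 1) % 3 = (k + 2) % 3), coord_add_two_vertex] at h₁
    linarith
  · rw [coord_congr hkl, coord_add_two_vertex] at h₀
    linarith

lemma vertex_injOn : InjOn vertex {k | 0 ≤ k ∧ k ≠ 1} :=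
  fun _ hk _ hl h => radius_injOn hk hl (radius_eq_of_vertex_eq h)

lemma sector_of_mem_edge (hn : 3 ≤ n) (hk : IsEdge n k) (hx : x ∈ edge n k) :
    0 ≤ coord k x ∧ coord (k + 1) x ≤ 0 := by
  have := hk.nonneg
  rcases lt_or_ge k 2 with hk2 | hk2
  · rw [mem_wall_iff hn (by omega)] at hx
    exact ⟨hx.1.ge, hx.2.1⟩
  · rw [mem_edge_iff hn hk hk2] at hx
    exact ⟨hx.1, hx.2.1⟩

lemma eq_vertex_of_mem_edge (hn : 3 ≤ n) (hk : IsEdge n k) (hk2 : 2 ≤ k) (hx : x ∈ edge n k)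
    (h : coord k x = 0 ∨ coord (k + 1) x = 0) : x = vertex k ∨ x = vertex (next n k) := by
  obtain ⟨-, -, h_one⟩ := (mem_edge_iff hn hk hk2).1 hx
  rcases h with h | h
  · right
    rw [edgeForm_of_coord_eq_zero h, div_eq_one_iff_eq (next_add_two_pos n hk.nonneg).ne'] at h_one
    rw [vertex, dir_next, radius_of_two_le (two_le_next hn hk.nonneg), ← h_one]
    conv_lhs => rw [eq_coord_smul_dir k x, h, zero_smul, zero_sub, ← neg_smul]
  · left
    rw [edgeForm_of_coord_succ_eq_zero h,
      div_eq_one_iff_eq (by exact_mod_cast (by omega : k + 2 ≠ 0))] at h_one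
    rw [vertex, radius_of_two_le hk2, ← h_one]
    conv_lhs => rw [eq_coord_smul_dir k x, h, zero_smul, sub_zero]

lemma coord_eq_zero_of_mem_edge (hn : 3 ≤ n) (hk : IsEdge n k) (hl : IsEdge n l) (hl2 : 2 ≤ l)
    (hkl : k < l) (hxk : x ∈ edge n k) (hxl : x ∈ edge n l) :
    coord l x = 0 ∨ coord (l + 1) x = 0 := by
  obtain ⟨hk₀, hk₁⟩ := sector_of_mem_edge hn hk hxk
  obtain ⟨hl₀, hl₁⟩ := sector_of_mem_edge hn hl hxl
  have hk_nonneg := hk.nonneg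
  obtain h | h | h : k % 3 = l % 3 ∨ l % 3 = (k + 1) % 3 ∨ (l + 1) % 3 = k % 3 := by omega
  · left
    rw [← coord_congr h]
    rcases lt_or_ge k 2 with hk2 | hk2
    · exact ((mem_wall_iff hn (by omega)).1 hxk).1
    · by_contra h_ne
      have h_lt := edgeForm_lt_edgeForm n hk_nonneg h hkl (hk₀.lt_of_ne' h_ne) hk₁
      rw [((mem_edge_iff hn hl hl2).1 hxl).2.2, ((mem_edge_iff hn hk hk2).1 hxk).2.2] at h_lt
      exact lt_irrefl 1 h_lt
  · rw [coord_congr h] at hl₀ ⊢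
    exact Or.inl (le_antisymm hk₁ hl₀)
  · rw [coord_congr h] at hl₁ ⊢
    exact Or.inr (le_antisymm hl₁ hk₀)

lemma exists_vertex_of_mem_edge (hn : 3 ≤ n) (hk : IsEdge n k) (hl : IsEdge n l) (hkl : k ≠ l)
    (hxk : x ∈ edge n k) (hxl : x ∈ edge n l) :
    ∃ m, IsEdge n m ∧ (x = vertex m ∨ x = vertex (next n m)) := by
  wlog hlt : k < l generalizing k l
  · exact this hl hk hkl.symm hxl hxk (by omega)
  refine ⟨l, hl, ?_⟩
  rcases lt_or_ge l 2 with hl2 | hl2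
  · have := hk.nonneg
    obtain ⟨rfl, rfl⟩ : k = 0 ∧ l = 1 := by omega
    left
    rw [vertex_of_le_one le_rfl]
    refine eq_of_coord_eq 0 ?_ ?_ <;> rw [map_zero]
    · exact ((mem_wall_iff hn (Or.inl rfl)).1 hxk).1
    · exact ((mem_wall_iff hn (Or.inr rfl)).1 hxl).1
  · exact eq_vertex_of_mem_edge hn hl hl2 hxl (coord_eq_zero_of_mem_edge hn hk hl hl2 hlt hxk hxl)

lemma vertex_eq_of_mem_wall (hn : 3 ≤ n) (hk : k = 0 ∨ k = 1) (h : vertex m ∈ edge n k) :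
    vertex m = vertex k ∨ vertex m = vertex (next n k) := by
  rcases lt_or_ge m 2 with hm | hm
  · left
    rw [vertex_of_le_one (by omega), vertex_of_le_one (by omega)]
  obtain ⟨hk₀, -, hk₁⟩ := (mem_wall_iff hn hk).1 h
  have hm_pos : (0 : ℝ) < m + 2 := by exact_mod_cast (by omega : 0 < m + 2)
  obtain hkm | hkm | hkm : k % 3 = m % 3 ∨ k % 3 = (m + 1) % 3 ∨ k % 3 = (m + 2) % 3 := by omega
  · rw [coord_congr hkm, coord_vertex, radius_of_two_le hm] at hk₀
    linarith
  · right
    rw [coord_congr (by omega : (k + 1) % 3 = (m + 2) % 3), coord_add_two_vertex,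
      radius_of_two_le hm] at hk₁
    have : m ≤ k + 2 := by exact_mod_cast (by linarith : (m : ℝ) ≤ k + 2)
    rw [next_of_ne (by omega), show m = k + 2 by omega]
  · rw [coord_congr hkm, coord_add_two_vertex, radius_of_two_le hm] at hk₀
    linarith

lemma vertex_eq_of_mem_edge (hn : 3 ≤ n) (hk : IsEdge n k) (h : vertex m ∈ edge n k) :
    vertex m = vertex k ∨ vertex m = vertex (next n k) := by
  have hk_nonneg := hk.nonneg
  rcases lt_or_ge k 2 with hk2 | hk2
  · exact vertex_eq_of_mem_wall hn (by omega) h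
  refine eq_vertex_of_mem_edge hn hk hk2 h ?_
  obtain hkm | hkm | hkm : k % 3 = m % 3 ∨ k % 3 = (m + 1) % 3 ∨ k % 3 = (m + 2) % 3 := by omega
  · rw [coord_congr (by omega : (k + 1) % 3 = (m + 1) % 3)]
    exact Or.inr (coord_succ_vertex m)
  · rw [coord_congr hkm]
    exact Or.inl (coord_succ_vertex m)
  · have hk₀ := (sector_of_mem_edge hn hk h).1
    rw [coord_congr hkm, coord_add_two_vertex] at hk₀ ⊢
    exact Or.inl (le_antisymm (neg_nonpos.2 (radius_nonneg m)) hk₀)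

end Vertices

/-- The labels of the vertices of the double spiral in cyclic order: up the even arm and back down
the odd one. At `v = n` the value `1` is the second label of the starting point. -/
def vertexLabel (n v : ℤ) : ℤ := if 2 * v ≤ n then 2 * v else 2 * (n - v) + 1

/-- The label of the edge between the vertices number `v` and `v + 1` in the order of
`vertexLabel`. -/
def edgeLabel (n v : ℤ) : ℤ :=
  if 2 * v + 2 ≤ n then 2 * v else if 2 * v ≤ n then n else 2 * (n - v) - 1

/-- The vertex cycle of the double spiral. -/
noncomputable def cycle (n : ℕ) (i : ZMod n) : Plane := vertex (vertexLabel n i.val)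

section Labels

variable {n k v : ℤ}

lemma vertexLabel_eq_or (n v : ℤ) :
    vertexLabel n v = edgeLabel n v ∧ vertexLabel n (v + 1) = next n (edgeLabel n v) ∨
      vertexLabel n v = next n (edgeLabel n v) ∧ vertexLabel n (v + 1) = edgeLabel n v := by
  unfold vertexLabel edgeLabel next
  split_ifs <;> omega

lemma vertexLabel_injective (n : ℤ) : Function.Injective (vertexLabel n) := by
  intro v w h
  unfold vertexLabel at h
  split_ifs at h <;> omega

lemma edgeLabel_injective (n : ℤ) : Function.Injective (edgeLabel n) := by
  intro v w h
  unfold edgeLabel at h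
  split_ifs at h <;> omega

lemma vertexLabel_mem (hv : 0 ≤ v) (hvn : v < n) : vertexLabel n v ∈ {k | 0 ≤ k ∧ k ≠ 1} := by
  unfold vertexLabel
  constructor <;> split_ifs <;> omega

lemma isEdge_edgeLabel (hv : 0 ≤ v) (hvn : v < n) : IsEdge n (edgeLabel n v) := by
  unfold edgeLabel
  constructor <;> split_ifs <;> omega

lemma exists_edgeLabel_eq (hn : 3 ≤ n) (hk : IsEdge n k) :
    ∃ v, 0 ≤ v ∧ v < n ∧ edgeLabel n v = k := by
  obtain ⟨h₀, h₁, h₂⟩ := hk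
  unfold edgeLabel
  obtain rfl | h | h : k = n ∨ k < n ∧ k % 2 = 0 ∨ k < n ∧ k % 2 = 1 := by omega
  · exact ⟨k / 2, by omega, by omega, by split_ifs <;> omega⟩
  · exact ⟨k / 2, by omega, by omega, by split_ifs <;> omega⟩
  · exact ⟨n - (k + 1) / 2, by omega, by omega, by split_ifs <;> omega⟩

end Labels

section Cycle

variable {n : ℕ} {x : Plane}

lemma cycle_injective [NeZero n] : Function.Injective (cycle n) := by
  have h_label (i : ZMod n) : vertexLabel n i.val ∈ {k : ℤ | 0 ≤ k ∧ k ≠ 1} :=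
    vertexLabel_mem (by omega) (by exact_mod_cast i.val_lt)
  intro i j h
  exact ZMod.val_injective n
    (by exact_mod_cast vertexLabel_injective n (vertex_injOn (h_label i) (h_label j) h))

lemma cycle_add_one [NeZero n] (i : ZMod n) :
    cycle n (i + 1) = vertex (vertexLabel n (i.val + 1)) := by
  have h_cast : i + 1 = (i.val + 1 : ℕ) := by rw [Nat.cast_succ, ZMod.natCast_zmod_val]
  rw [cycle, h_cast]
  rcases Nat.lt_or_ge (i.val + 1) n with h | h
  · rw [ZMod.val_natCast_of_lt h, Nat.cast_succ]
  · have h_val : i.val + 1 = n := le_antisymm i.val_lt h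
    rw [h_val, ZMod.natCast_self, ZMod.val_zero, vertex_of_le_one, vertex_of_le_one]
    · unfold vertexLabel
      split_ifs <;> omega
    · unfold vertexLabel
      split_ifs <;> omega

lemma polyEdge_cycle [NeZero n] (i : ZMod n) :
    polyEdge (cycle n) i = edge n (edgeLabel n i.val) := by
  rw [polyEdge, cycle_add_one, cycle, edge]
  rcases vertexLabel_eq_or n i.val with ⟨h₀, h₁⟩ | ⟨h₀, h₁⟩
  · rw [h₀, h₁]
  · rw [h₀, h₁, segment_symm]

lemma eq_cycle_or [NeZero n] {i : ZMod n}
    (h : x = vertex (edgeLabel n i.val) ∨ x = vertex (next n (edgeLabel n i.val))) :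
    x = cycle n i ∨ x = cycle n (i + 1) := by
  rw [cycle_add_one, cycle]
  rcases vertexLabel_eq_or n i.val with ⟨h₀, h₁⟩ | ⟨h₀, h₁⟩
  · rwa [h₀, h₁]
  · rw [h₀, h₁]
    exact h.symm

lemma isEdge_edgeLabel_val [NeZero n] (i : ZMod n) : IsEdge n (edgeLabel n i.val) :=
  isEdge_edgeLabel (by omega) (by exact_mod_cast i.val_lt)

lemma exists_edgeLabel_val_eq {k : ℤ} (hn : 3 ≤ n) (hk : IsEdge n k) :
    ∃ i : ZMod n, edgeLabel n i.val = k := by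
  obtain ⟨v, hv, hvn, h⟩ := exists_edgeLabel_eq (by exact_mod_cast hn) hk
  lift v to ℕ using hv
  exact ⟨v, by rwa [ZMod.val_natCast_of_lt (by exact_mod_cast hvn)]⟩

lemma isSimplePolygon_cycle (hn : 3 ≤ n) : IsSimplePolygon (cycle n) := by
  have : NeZero n := ⟨by omega⟩
  have hn' : (3 : ℤ) ≤ n := by exact_mod_cast hn
  refine isSimplePolygon_of_inter_subset_range hn cycle_injective ?_ ?_
  · rintro i j hij x ⟨hi, hj⟩
    have h_ne : edgeLabel n i.val ≠ edgeLabel n j.val := fun h =>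
      hij (ZMod.val_injective n (by exact_mod_cast edgeLabel_injective n h))
    rw [polyEdge_cycle] at hi hj
    obtain ⟨k, hk, hx⟩ := exists_vertex_of_mem_edge hn' (isEdge_edgeLabel_val i)
      (isEdge_edgeLabel_val j) h_ne hi hj
    obtain ⟨l, rfl⟩ := exists_edgeLabel_val_eq hn hk
    rcases eq_cycle_or hx with rfl | rfl <;> exact mem_range_self _
  · intro m i hm
    rw [polyEdge_cycle] at hm
    exact (eq_cycle_or (vertex_eq_of_mem_edge hn' (isEdge_edgeLabel_val i) hm)).imp
      (fun h => cycle_injective h) fun h => cycle_injective h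

lemma polyBody_cycle (hn : 3 ≤ n) : polyBody (cycle n) = spiral n := by
  have : NeZero n := ⟨by omega⟩
  ext x
  rw [polyBody, mem_iUnion]
  constructor
  · rintro ⟨i, hi⟩
    rw [polyEdge_cycle] at hi
    exact ⟨_, isEdge_edgeLabel_val i, hi⟩
  · rintro ⟨k, hk, hx⟩
    obtain ⟨i, rfl⟩ := exists_edgeLabel_val_eq hn hk
    exact ⟨i, by rwa [polyEdge_cycle]⟩

end Cycle

section Regions

variable {n : ℤ}

lemma isPreconnected_corridor_zero (hn : 3 ≤ n) : IsPreconnected (corridor n 0) :=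
  PolyPath.isPreconnected_of_forall fun _ ha _ hb =>
    let ⟨m, _, h⟩ := exists_polyPath_corridor_zero hn ha hb
    ⟨m, h⟩

lemma intP_spiral (hn : 3 ≤ n) : intP (spiral n) = corridor n 1 :=
  intP_eq (isOpen_corridor hn 1) (isOpen_corridor hn 0) (disjoint_corridor hn)
    (compl_spiral_eq hn) (isBounded_corridor_one hn) (isPreconnected_corridor_zero hn)
    (not_isBounded_corridor_zero hn)

lemma extP_spiral (hn : 3 ≤ n) : extP (spiral n) = corridor n 0 :=
  extP_eq (isOpen_corridor hn 1) (isOpen_corridor hn 0) (disjoint_corridor hn)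
    (compl_spiral_eq hn) (isBounded_corridor_one hn) (isPreconnected_corridor_zero hn)
    (not_isBounded_corridor_zero hn)

end Regions

end DoubleSpiral

open DoubleSpiral

theorem stmt19 (n : ℕ) (hn : 3 ≤ n) :
    ∃ p : ZMod n → Plane, IsSimplePolygon p ∧
      (∀ a ∈ intP (polyBody p), ∀ b ∈ intP (polyBody p),
        ∃ k ≤ n / 2, PolyPath (intP (polyBody p)) a b k) ∧
      (∃ a ∈ intP (polyBody p), ∃ b ∈ intP (polyBody p),
        ∀ k : ℕ, PolyPath (intP (polyBody p)) a b k → n / 2 ≤ k) ∧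
      (∀ a ∈ extP (polyBody p), ∀ b ∈ extP (polyBody p),
        ∃ k ≤ (n + 1) / 2, PolyPath (extP (polyBody p)) a b k) ∧
      (∃ a ∈ extP (polyBody p), ∃ b ∈ extP (polyBody p),
        ∀ k : ℕ, PolyPath (extP (polyBody p)) a b k → (n + 1) / 2 ≤ k) := by
  have hn' : (3 : ℤ) ≤ n := by exact_mod_cast hn
  refine ⟨cycle n, isSimplePolygon_cycle hn, ?_⟩
  rw [polyBody_cycle hn, intP_spiral hn', extP_spiral hn']
  refine ⟨fun a ha b hb => ?_, ?_, fun a ha b hb => ?_, ?_⟩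
  · obtain ⟨k, hk, h⟩ := exists_polyPath_corridor_one hn' ha hb
    exact ⟨k, by omega, h⟩
  · obtain ⟨a, ha, b, hb, h⟩ := exists_forall_polyPath_corridor_one hn'
    exact ⟨a, ha, b, hb, fun k hk => by have := h k hk; omega⟩
  · obtain ⟨k, hk, h⟩ := exists_polyPath_corridor_zero hn' ha hb
    exact ⟨k, by omega, h⟩
  · obtain ⟨a, ha, b, hb, h⟩ := exists_forall_polyPath_corridor_zero hn'
    exact ⟨a, ha, b, hb, fun k hk => by have := h k hk; omega⟩
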